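/- arXiv:math/0510184 — 5 statements merged into one kernel-verified Lean document; each statement's English description precedes it below -/
import Mathlib

section
/- Let f : ℂ → ℝ be a real-differentiable (C¹) function, let g, η : V → ℂ be functions on an open neighborhood V of the origin of ℂ × ℝ with η real-differentiable, and let h : V → ℂ be a C¹ function with L⁰h = 0 on V and h(p) ≠ 0 for all p ∈ V. Suppose u₁ is a C¹ function on an open neighborhood U₁ of the origin with L⁰u₁ = e^η·g on U₁, and u₂ is a C¹ function on an open neighborhood U₂ of the origin with L⁰u₂ = (e^η + h)·g on U₂. Then the function u := (u₂ − u₁)/h is C¹ on V ∩ U₁ ∩ U₂ and satisfies L⁰u = g there. Consequently, if the equation L⁰u = g is not locally solvable at the origin, then at least one of the two equations L⁰u = e^η·g and L⁰u = (e^η + h)·g is not locally solvable at the origin. -/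
/-- The Wirtinger derivative `∂̄u` in the complex variable `z` of a function
`u : ℂ × ℝ → ℂ`, computed from the real Fréchet derivative. -/
noncomputable def wirt (u : ℂ × ℝ → ℂ) (p : ℂ × ℝ) : ℂ :=
  (1 / 2 : ℂ) * (fderiv ℝ u p (1, 0) + Complex.I * fderiv ℝ u p (Complex.I, 0))

/-- The partial derivative `∂u/∂s` in the real variable `s` of `u : ℂ × ℝ → ℂ`. -/
noncomputable def pds (u : ℂ × ℝ → ℂ) (p : ℂ × ℝ) : ℂ :=
  fderiv ℝ u p (0, 1)

/-- The Wirtinger derivative `∂̄f` of a real-valued function `f : ℂ → ℝ`, as a complex number. -/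
noncomputable def wirtf (f : ℂ → ℝ) (z : ℂ) : ℂ :=
  (1 / 2 : ℂ) * ((fderiv ℝ f z 1 : ℂ) + Complex.I * (fderiv ℝ f z Complex.I : ℂ))

/-- The operator `L⁰u = ∂̄u − i·(∂̄f)·∂u/∂s`. -/
noncomputable def L0 (f : ℂ → ℝ) (u : ℂ × ℝ → ℂ) (p : ℂ × ℝ) : ℂ :=
  wirt u p - Complex.I * wirtf f p.1 * pds u p

/-- The equation `L⁰u = G` is locally solvable at the origin: there exist an open
neighborhood `U` of `(0,0)` in `ℂ × ℝ` and a `C¹` function `u` on `U` with `L⁰u = G` on `U`. -/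
def LocSolv (f : ℂ → ℝ) (G : ℂ × ℝ → ℂ) : Prop :=
  ∃ U : Set (ℂ × ℝ), IsOpen U ∧ ((0, 0) : ℂ × ℝ) ∈ U ∧
    ∃ u : ℂ × ℝ → ℂ, ContDiffOn ℝ 1 u U ∧ ∀ p ∈ U, L0 f u p = G p

/-!
The operator `L⁰` is a complex vector field, so it obeys the Leibniz rule, and a nonvanishing `h`
with `L⁰h = 0` can be treated as a constant: `L⁰(u / h) = (L⁰u) / h`. For `u = u₂ - u₁` the right
hand sides differ by `h·g`, whatever their common part is, so `L⁰u = h·g` and `L⁰(u / h) = g`.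
-/

section VectorField

variable {𝕜 K E : Type*} [NontriviallyNormedField 𝕜] [NormedField K] [NormedAlgebra 𝕜 K]
  [NormedAddCommGroup E] [NormedSpace 𝕜 E]

/-- The derivative of `u : E → K` along a `K`-valued vector field `X` on `E`. For `𝕜 = ℝ`, `K = ℂ`
these are the homogeneous first-order operators with complex coefficients; a value of `X` is encoded
as a `K`-linear form on differentials, which spares us the complexification of `E`. -/
noncomputable def derivAlong (X : E → Module.Dual K (E →L[𝕜] K)) (u : E → K) (x : E) : K :=
  X x (fderiv 𝕜 u x)

/-- `u` is a classical (that is, `C¹`) solution of the equation `X u = G` on the set `U`. -/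
def IsSolutionOn (X : E → Module.Dual K (E →L[𝕜] K)) (G u : E → K) (U : Set E) : Prop :=
  ContDiffOn 𝕜 1 u U ∧ ∀ x ∈ U, derivAlong X u x = G x

/-- The equation `X u = G` has a `C¹` solution on some open neighborhood of `x₀`. -/
def IsLocallySolvableAt (X : E → Module.Dual K (E →L[𝕜] K)) (G : E → K) (x₀ : E) : Prop :=
  ∃ U : Set E, IsOpen U ∧ x₀ ∈ U ∧ ∃ u : E → K, IsSolutionOn X G u U

variable {X : E → Module.Dual K (E →L[𝕜] K)} {u v h G G₁ G₂ g : E → K} {U V : Set E} {x x₀ : E}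

theorem derivAlong_fun_sub (hu : DifferentiableAt 𝕜 u x) (hv : DifferentiableAt 𝕜 v x) :
    derivAlong X (fun y ↦ u y - v y) x = derivAlong X u x - derivAlong X v x := by
  simp only [derivAlong, fderiv_fun_sub hu hv, map_sub]

theorem derivAlong_fun_mul (hu : DifferentiableAt 𝕜 u x) (hv : DifferentiableAt 𝕜 v x) :
    derivAlong X (fun y ↦ u y * v y) x = u x * derivAlong X v x + v x * derivAlong X u x := by
  simp only [derivAlong, fderiv_fun_mul hu hv, map_add, map_smul, smul_eq_mul]

theorem derivAlong_fun_inv (hh : DifferentiableAt 𝕜 h x) (hx : h x ≠ 0) :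
    derivAlong X (fun y ↦ (h y)⁻¹) x = -(derivAlong X h x / h x ^ 2) := by
  have fderiv_inv : fderiv 𝕜 (fun y ↦ (h y)⁻¹) x = -(h x ^ 2)⁻¹ • fderiv 𝕜 h x := by
    refine ((hasFDerivAt_inv' (𝕜 := 𝕜) hx).comp x hh.hasFDerivAt).fderiv.trans ?_
    ext w
    simp only [ContinuousLinearMap.neg_comp, neg_apply, ContinuousLinearMap.comp_apply,
      ContinuousLinearMap.mulLeftRight_apply, smul_apply, smul_eq_mul]
    ring
  simp only [derivAlong, fderiv_inv, map_smul, smul_eq_mul]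
  ring

theorem derivAlong_fun_div_of_derivAlong_eq_zero (hu : DifferentiableAt 𝕜 u x)
    (hh : DifferentiableAt 𝕜 h x) (hx : h x ≠ 0) (hXh : derivAlong X h x = 0) :
    derivAlong X (fun y ↦ u y / h y) x = derivAlong X u x / h x := by
  simp only [div_eq_mul_inv]
  rw [derivAlong_fun_mul hu (hh.fun_inv hx), derivAlong_fun_inv hh hx, hXh]
  ring

namespace IsSolutionOn

theorem mono (hu : IsSolutionOn X G u U) (hVU : V ⊆ U) : IsSolutionOn X G u V :=
  ⟨hu.1.mono hVU, fun x hx ↦ hu.2 x (hVU hx)⟩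

theorem differentiableAt (hu : IsSolutionOn X G u U) (hU : IsOpen U) (hx : x ∈ U) :
    DifferentiableAt 𝕜 u x :=
  hu.1.differentiableOn_one.differentiableAt (hU.mem_nhds hx)

theorem fun_sub (hU : IsOpen U) (hu : IsSolutionOn X G₁ u U) (hv : IsSolutionOn X G₂ v U) :
    IsSolutionOn X (fun x ↦ G₁ x - G₂ x) (fun x ↦ u x - v x) U := by
  refine ⟨hu.1.sub hv.1, fun x hx ↦ ?_⟩
  rw [derivAlong_fun_sub (hu.differentiableAt hU hx) (hv.differentiableAt hU hx), hu.2 x hx,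
    hv.2 x hx]

theorem fun_div (hU : IsOpen U) (hu : IsSolutionOn X G u U) (hh : IsSolutionOn X 0 h U)
    (hne : ∀ x ∈ U, h x ≠ 0) :
    IsSolutionOn X (fun x ↦ G x / h x) (fun x ↦ u x / h x) U := by
  refine ⟨?_, fun x hx ↦ ?_⟩
  · simpa only [div_eq_mul_inv] using hu.1.mul (hh.1.fun_inv hne)
  · rw [derivAlong_fun_div_of_derivAlong_eq_zero (hu.differentiableAt hU hx)
      (hh.differentiableAt hU hx) (hne x hx) (hh.2 x hx), hu.2 x hx]

theorem fun_sub_div {U₁ U₂ : Set E} {u₁ u₂ : E → K} (hV : IsOpen V) (hh : IsSolutionOn X 0 h V)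
    (hne : ∀ x ∈ V, h x ≠ 0) (hU₁ : IsOpen U₁) (hu₁ : IsSolutionOn X G u₁ U₁) (hU₂ : IsOpen U₂)
    (hu₂ : IsSolutionOn X (fun x ↦ G x + h x * g x) u₂ U₂) :
    IsSolutionOn X g (fun x ↦ (u₂ x - u₁ x) / h x) (V ∩ U₁ ∩ U₂) := by
  have hW : IsOpen (V ∩ U₁ ∩ U₂) := (hV.inter hU₁).inter hU₂
  have hsub := (hu₂.mono fun _ hx ↦ hx.2).fun_sub hW (hu₁.mono fun _ hx ↦ hx.1.2)
  have hdiv := hsub.fun_div hW (hh.mono fun _ hx ↦ hx.1.1) fun x hx ↦ hne x hx.1.1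
  refine ⟨hdiv.1, fun x hx ↦ ?_⟩
  calc derivAlong X (fun y ↦ (u₂ y - u₁ y) / h y) x
      = (G x + h x * g x - G x) / h x := hdiv.2 x hx
    _ = g x := by rw [add_sub_cancel_left, mul_div_cancel_left₀ _ (hne x hx.1.1)]

end IsSolutionOn

theorem IsLocallySolvableAt.of_add_mul (hV : IsOpen V) (hx₀ : x₀ ∈ V) (hh : IsSolutionOn X 0 h V)
    (hne : ∀ x ∈ V, h x ≠ 0) (hG : IsLocallySolvableAt X G x₀)
    (hGg : IsLocallySolvableAt X (fun x ↦ G x + h x * g x) x₀) : IsLocallySolvableAt X g x₀ := by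
  obtain ⟨U₁, hU₁, hx₁, u₁, hu₁⟩ := hG
  obtain ⟨U₂, hU₂, hx₂, u₂, hu₂⟩ := hGg
  exact ⟨V ∩ U₁ ∩ U₂, (hV.inter hU₁).inter hU₂, ⟨⟨hx₀, hx₁⟩, hx₂⟩, _,
    .fun_sub_div hV hh hne hU₁ hu₁ hU₂ hu₂⟩

theorem quotient_solution_and_nonsolvability_general (X : E → Module.Dual K (E →L[𝕜] K))
    (V : Set E) (hV : IsOpen V) (x₀ : E) (hx₀ : x₀ ∈ V) (G g h : E → K)
    (hh : IsSolutionOn X 0 h V) (hne : ∀ x ∈ V, h x ≠ 0) :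
    (∀ (U₁ U₂ : Set E) (u₁ u₂ : E → K),
      IsOpen U₁ → IsSolutionOn X G u₁ U₁ →
      IsOpen U₂ → IsSolutionOn X (fun x ↦ G x + h x * g x) u₂ U₂ →
      IsSolutionOn X g (fun x ↦ (u₂ x - u₁ x) / h x) (V ∩ U₁ ∩ U₂)) ∧
    (¬ IsLocallySolvableAt X g x₀ →
      ¬ IsLocallySolvableAt X G x₀ ∨
      ¬ IsLocallySolvableAt X (fun x ↦ G x + h x * g x) x₀) := by
  refine ⟨fun U₁ U₂ u₁ u₂ hU₁ hu₁ hU₂ hu₂ ↦ .fun_sub_div hV hh hne hU₁ hu₁ hU₂ hu₂, ?_⟩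
  rw [← not_and_or, not_imp_not]
  exact fun ⟨hG, hGg⟩ ↦ hG.of_add_mul hV hx₀ hh hne hGg

end VectorField

/-- The complex vector field on `ℂ × ℝ` whose action on functions is the operator `L⁰`. -/
noncomputable def L0Field (f : ℂ → ℝ) (p : ℂ × ℝ) : Module.Dual ℂ (ℂ × ℝ →L[ℝ] ℂ) where
  toFun T := (1 / 2 : ℂ) * (T (1, 0) + Complex.I * T (Complex.I, 0)) -
    Complex.I * wirtf f p.1 * T (0, 1)
  map_add' S T := by
    simp only [add_apply]
    ring
  map_smul' c T := by
    simp only [smul_apply, smul_eq_mul, RingHom.id_apply]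
    ring

theorem derivAlong_L0Field (f : ℂ → ℝ) : derivAlong (L0Field f) = L0 f := rfl

theorem isLocallySolvableAt_L0Field_iff_locSolv {f : ℂ → ℝ} {G : ℂ × ℝ → ℂ} :
    IsLocallySolvableAt (L0Field f) G (0, 0) ↔ LocSolv f G := Iff.rfl

/-- If `h` is `C¹`, nonvanishing and `L⁰`-flat on a neighborhood `V` of the origin, and
`u₁, u₂` are `C¹` solutions of `L⁰u₁ = e^η·g` and `L⁰u₂ = (e^η + h)·g` near the origin,
then `(u₂ − u₁)/h` is a `C¹` solution of `L⁰u = g` on `V ∩ U₁ ∩ U₂`. Consequently, if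
`L⁰u = g` is not locally solvable at the origin, then one of the equations
`L⁰u = e^η·g`, `L⁰u = (e^η + h)·g` is not locally solvable at the origin. -/
theorem quotient_solution_and_nonsolvability (f : ℂ → ℝ) (hf : ContDiff ℝ 1 f)
    (V : Set (ℂ × ℝ)) (hV : IsOpen V) (hV0 : ((0, 0) : ℂ × ℝ) ∈ V)
    (g η h : ℂ × ℝ → ℂ)
    (hη : ∀ p ∈ V, DifferentiableAt ℝ η p)
    (hh : ContDiffOn ℝ 1 h V) (hhL : ∀ p ∈ V, L0 f h p = 0)
    (hhne : ∀ p ∈ V, h p ≠ 0) :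
    (∀ (U₁ U₂ : Set (ℂ × ℝ)) (u₁ u₂ : ℂ × ℝ → ℂ),
      IsOpen U₁ → ((0, 0) : ℂ × ℝ) ∈ U₁ → ContDiffOn ℝ 1 u₁ U₁ →
      (∀ p ∈ U₁, L0 f u₁ p = Complex.exp (η p) * g p) →
      IsOpen U₂ → ((0, 0) : ℂ × ℝ) ∈ U₂ → ContDiffOn ℝ 1 u₂ U₂ →
      (∀ p ∈ U₂, L0 f u₂ p = (Complex.exp (η p) + h p) * g p) →
      ContDiffOn ℝ 1 (fun q => (u₂ q - u₁ q) / h q) (V ∩ U₁ ∩ U₂) ∧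
      ∀ p ∈ V ∩ U₁ ∩ U₂, L0 f (fun q => (u₂ q - u₁ q) / h q) p = g p) ∧
    (¬ LocSolv f g →
      ¬ LocSolv f (fun p => Complex.exp (η p) * g p) ∨
      ¬ LocSolv f (fun p => (Complex.exp (η p) + h p) * g p)) := by
  have general := quotient_solution_and_nonsolvability_general (L0Field f) V hV (0, 0) hV0
    (fun p ↦ Complex.exp (η p) * g p) g h ⟨hh, hhL⟩ hhne
  simp only [IsSolutionOn, derivAlong_L0Field, isLocallySolvableAt_L0Field_iff_locSolv,
    ← add_mul] at general
  exact ⟨fun U₁ U₂ u₁ u₂ hU₁ _ hu₁ hL₁ hU₂ _ hu₂ hL₂ ↦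
    general.1 U₁ U₂ u₁ u₂ hU₁ ⟨hu₁, hL₁⟩ hU₂ ⟨hu₂, hL₂⟩, general.2⟩
end

section
/- (Lemma 1 of the paper.) Let f : ℂ → ℝ be real analytic (analytic over ℝ as a function of the underlying real variables) and let g : ℂ × ℝ → ℂ be a smooth function with compact support. Suppose that the equation L⁰u = g is NOT locally solvable at the origin. Then there exist an open neighborhood V of the origin of ℂ × ℝ and a real analytic function η : V → ℂ with (L⁰η)(0,0) ≠ 0 such that the equation L⁰u = e^η·g is not locally solvable at the origin. -/
/-!
Let `L u = σ (du)` be a first-order operator and let `ℓ` be a real-linear `ℂ`-valued map with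
`σ ℓ ≠ 0` at `x₀`. The functions `η± = log (1 ± ℓ (x - x₀))` are analytic near `x₀`, have
differential `±ℓ` there, and satisfy `e^η₊ + e^η₋ = 2`. If `L u = e^η± g` were solvable for both
signs, the average of the two solutions would solve `L u = g`. For `L⁰`, the map `ℓ (z, s) = conj z`
is such an `ℓ`.
-/

open Topology

section FirstOrderOperator

variable {E : Type*} [NormedAddCommGroup E] [NormedSpace ℝ E]

/-- Local solvability at `x₀` of `L u = G` by a `C¹` function, for the first-order operator
`(L u) x = σ x (du x)`. The operator is encoded by its symbol `σ`, which at each point is a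
real-linear functional of the differential of `u`. -/
def LocallySolvableAt (σ : E → (E →L[ℝ] ℂ) →ₗ[ℝ] ℂ) (x₀ : E) (G : E → ℂ) : Prop :=
  ∃ U : Set E, IsOpen U ∧ x₀ ∈ U ∧
    ∃ u : E → ℂ, ContDiffOn ℝ 1 u U ∧ ∀ x ∈ U, σ x (fderiv ℝ u x) = G x

namespace LocallySolvableAt

variable {σ : E → (E →L[ℝ] ℂ) →ₗ[ℝ] ℂ} {x₀ : E} {G H : E → ℂ}

theorem congr (hG : LocallySolvableAt σ x₀ G) (hGH : G =ᶠ[𝓝 x₀] H) :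
    LocallySolvableAt σ x₀ H := by
  obtain ⟨U, hU, hxU, u, hu, hLu⟩ := hG
  obtain ⟨W, hW_eq, hW, hxW⟩ := eventually_nhds_iff.1 hGH
  exact ⟨U ∩ W, hU.inter hW, ⟨hxU, hxW⟩, u, hu.mono Set.inter_subset_left,
    fun x hx => (hLu x hx.1).trans (hW_eq x hx.2)⟩

theorem add (hG : LocallySolvableAt σ x₀ G) (hH : LocallySolvableAt σ x₀ H) :
    LocallySolvableAt σ x₀ (G + H) := by
  obtain ⟨U, hU, hxU, u, hu, hLu⟩ := hG
  obtain ⟨W, hW, hxW, w, hw, hLw⟩ := hH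
  refine ⟨U ∩ W, hU.inter hW, ⟨hxU, hxW⟩, u + w,
    (hu.mono Set.inter_subset_left).add (hw.mono Set.inter_subset_right), ?_⟩
  rintro x ⟨hxU, hxW⟩
  have hdu : DifferentiableAt ℝ u x := hu.differentiableOn_one.differentiableAt (hU.mem_nhds hxU)
  have hdw : DifferentiableAt ℝ w x := hw.differentiableOn_one.differentiableAt (hW.mem_nhds hxW)
  rw [fderiv_add hdu hdw, map_add, hLu x hxU, hLw x hxW, Pi.add_apply]

theorem const_smul (c : ℝ) (hG : LocallySolvableAt σ x₀ G) : LocallySolvableAt σ x₀ (c • G) := by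
  obtain ⟨U, hU, hxU, u, hu, hLu⟩ := hG
  refine ⟨U, hU, hxU, c • u, hu.const_smul c, fun x hx => ?_⟩
  rw [fderiv_const_smul_field, Pi.smul_apply, map_smul, hLu x hx, Pi.smul_apply]

end LocallySolvableAt

/-- The function `x ↦ log (1 + ℓ (x - x₀))`, a local logarithm of an affine function equal to `1`
at `x₀`. Off the set `‖ℓ (x - x₀)‖ < 1` the principal branch of the logarithm may jump. -/
noncomputable def logAffine (ℓ : E →L[ℝ] ℂ) (x₀ x : E) : ℂ :=
  Complex.log (1 + ℓ (x - x₀))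

variable {ℓ : E →L[ℝ] ℂ} {x₀ : E}

variable (ℓ x₀) in
theorem isOpen_setOf_norm_apply_sub_lt_one : IsOpen {x | ‖ℓ (x - x₀)‖ < 1} :=
  isOpen_lt (by fun_prop) continuous_const

theorem exp_logAffine {x : E} (hx : ‖ℓ (x - x₀)‖ < 1) :
    Complex.exp (logAffine ℓ x₀ x) = 1 + ℓ (x - x₀) :=
  Complex.exp_log (Complex.slitPlane_ne_zero (Complex.mem_slitPlane_of_norm_lt_one hx))

theorem analyticOnNhd_logAffine : AnalyticOnNhd ℝ (logAffine ℓ x₀) {x | ‖ℓ (x - x₀)‖ < 1} := by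
  intro x hx
  have hlog : AnalyticAt ℝ Complex.log (1 + ℓ (x - x₀)) :=
    (analyticAt_clog (Complex.mem_slitPlane_of_norm_lt_one hx)).restrictScalars
  have haffine : AnalyticAt ℝ (fun y => 1 + ℓ (y - x₀)) x :=
    analyticAt_const.add ((ℓ.analyticAt _).comp (analyticAt_id.sub analyticAt_const))
  exact AnalyticAt.comp (g := Complex.log) (f := fun y => 1 + ℓ (y - x₀)) hlog haffine

theorem hasFDerivAt_logAffine : HasFDerivAt (logAffine ℓ x₀) ℓ x₀ := by
  have haffine : HasFDerivAt (fun x => 1 + ℓ (x - x₀)) ℓ x₀ :=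
    (ℓ.hasFDerivAt.comp x₀ (hasFDerivAt_sub_const x₀)).const_add 1
  have hlog : HasDerivAt Complex.log 1 (1 + ℓ (x₀ - x₀)) := by
    simpa using Complex.hasDerivAt_log Complex.one_mem_slitPlane
  exact (hlog.comp_hasFDerivAt x₀ haffine).congr_fderiv (one_smul ℂ ℓ)

variable (ℓ) in
theorem LocallySolvableAt.of_exp_logAffine_mul {σ : E → (E →L[ℝ] ℂ) →ₗ[ℝ] ℂ} {g : E → ℂ}
    (hpos : LocallySolvableAt σ x₀ fun x => Complex.exp (logAffine ℓ x₀ x) * g x)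
    (hneg : LocallySolvableAt σ x₀ fun x => Complex.exp (logAffine (-ℓ) x₀ x) * g x) :
    LocallySolvableAt σ x₀ g := by
  refine ((hpos.add hneg).const_smul (1 / 2)).congr ?_
  filter_upwards [(isOpen_setOf_norm_apply_sub_lt_one ℓ x₀).mem_nhds (by simp)] with x hx
  have hx_neg : ‖(-ℓ) (x - x₀)‖ < 1 := by rwa [neg_apply, norm_neg]
  simp only [Pi.smul_apply, Pi.add_apply, exp_logAffine hx, exp_logAffine hx_neg,
    neg_apply, Complex.real_smul]
  push_cast
  ring

theorem exists_eta_nonsolvable_general (σ : E → (E →L[ℝ] ℂ) →ₗ[ℝ] ℂ) (hσ : σ x₀ ≠ 0)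
    {g : E → ℂ} (hns : ¬ LocallySolvableAt σ x₀ g) :
    ∃ V : Set E, IsOpen V ∧ x₀ ∈ V ∧ ∃ η : E → ℂ, AnalyticOnNhd ℝ η V ∧
      σ x₀ (fderiv ℝ η x₀) ≠ 0 ∧
      ¬ LocallySolvableAt σ x₀ (fun x => Complex.exp (η x) * g x) := by
  obtain ⟨ℓ, hℓ⟩ : ∃ ℓ, σ x₀ ℓ ≠ 0 := DFunLike.ne_iff.1 hσ
  by_contra hsolvable
  have solvable_logAffine (m : E →L[ℝ] ℂ) (hm : σ x₀ m ≠ 0) :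
      LocallySolvableAt σ x₀ fun x => Complex.exp (logAffine m x₀ x) * g x := by
    by_contra hns_m
    exact hsolvable ⟨{x | ‖m (x - x₀)‖ < 1}, isOpen_setOf_norm_apply_sub_lt_one m x₀, by simp,
      logAffine m x₀, analyticOnNhd_logAffine, by rwa [hasFDerivAt_logAffine.fderiv], hns_m⟩
  exact hns (.of_exp_logAffine_mul ℓ (solvable_logAffine ℓ hℓ)
    (solvable_logAffine (-ℓ) (by simpa using hℓ)))

end FirstOrderOperator

/-- The symbol of `L⁰`: by definition, `L0 f u p = L0Symbol f p (fderiv ℝ u p)`, and `LocSolv f` is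
`LocallySolvableAt (L0Symbol f) (0, 0)`. -/
noncomputable def L0Symbol (f : ℂ → ℝ) (p : ℂ × ℝ) : (ℂ × ℝ →L[ℝ] ℂ) →ₗ[ℝ] ℂ where
  toFun D := (1 / 2 : ℂ) * (D (1, 0) + Complex.I * D (Complex.I, 0)) -
    Complex.I * wirtf f p.1 * D (0, 1)
  map_add' D D' := by
    simp only [add_apply]
    ring
  map_smul' c D := by
    simp only [smul_apply, Complex.real_smul, RingHom.id_apply]
    ring

theorem L0Symbol_conj_comp_fst (f : ℂ → ℝ) (p : ℂ × ℝ) :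
    L0Symbol f p ((Complex.conjCLE : ℂ →L[ℝ] ℂ).comp (.fst ℝ ℂ ℝ)) = 1 := by
  norm_num [L0Symbol]

theorem L0Symbol_ne_zero (f : ℂ → ℝ) (p : ℂ × ℝ) : L0Symbol f p ≠ 0 :=
  DFunLike.ne_iff.2 ⟨_, ne_of_eq_of_ne (L0Symbol_conj_comp_fst f p) one_ne_zero⟩

/-- Lemma 1 of the paper: if `f` is real analytic, `g` is smooth with compact support,
and `L⁰u = g` is not locally solvable at the origin, then there is a real analytic
function `η` near the origin with `(L⁰η)(0,0) ≠ 0` such that `L⁰u = e^η·g` is not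
locally solvable at the origin. -/
theorem exists_eta_nonsolvable (f : ℂ → ℝ) (hf : ∀ z : ℂ, AnalyticAt ℝ f z)
    (g : ℂ × ℝ → ℂ) (hg : ContDiff ℝ (⊤ : ℕ∞) g) (hgs : HasCompactSupport g)
    (hns : ¬ LocSolv f g) :
    ∃ V : Set (ℂ × ℝ), IsOpen V ∧ ((0, 0) : ℂ × ℝ) ∈ V ∧
      ∃ η : ℂ × ℝ → ℂ, (∀ p ∈ V, AnalyticAt ℝ η p) ∧
        L0 f η ((0, 0) : ℂ × ℝ) ≠ 0 ∧
        ¬ LocSolv f (fun p => Complex.exp (η p) * g p) := by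
  exact exists_eta_nonsolvable_general (L0Symbol f) (L0Symbol_ne_zero f (0, 0)) hns
end

section
/- (Cauchy–Kovalevskaya step in the proof of Lemma 1.) Let f : ℂ → ℝ and η : W → ℂ be real analytic on a neighborhood W of the origin of ℂ (respectively of ℂ × ℝ). Then there exist an open neighborhood U of the origin in ℂ × ℝ and a real analytic function v : U → ℂ such that L⁰v = 0 on U and v(z,s) = e^{η(z,s)} for every (z,s) ∈ U with Re z = 0. In particular v(0,0) = e^{η(0,0)} ≠ 0 and (e^η + v)(0,0) = 2e^{η(0,0)} ≠ 0. -/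
/-!
The operator `L⁰` is a complex vector field, so a holomorphic function of first integrals of `L⁰`
is again annihilated by `L⁰`. Two first integrals are `z` and `s + i f(z)`, and on a line
`Re z = c` a real analytic function of `z` coincides with a holomorphic one, obtained by letting
the coordinate `Im z` in its Taylor series take complex values. With such an `h` for `f`, the first
integral `σ = s + i f(z) - i h(z)` restricts to `s` on the initial surface. Extending the Cauchy
data in the same way to a holomorphic `G(z, s)`, the solution is `v = G(z, σ)`.
-/

open Complex Filter Topology

section ScalarExtension

variable {𝕜 : Type*} (𝕂 : Type*) [NontriviallyNormedField 𝕜] [NontriviallyNormedField 𝕂]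
  {ι : Type*} [Fintype ι] {F : Type*} [NormedAddCommGroup F] [NormedSpace 𝕜 F] [NormedSpace 𝕂 F]

section Series

variable [DecidableEq ι]

/-- The power series over `𝕂` on `ι → 𝕂` with the same coefficients as the power series `p` over
`𝕜` on `ι → 𝕜`: its `n`-th term extends the `n`-linear map `p n`, expanded in the standard basis,
to a `𝕂`-multilinear map. For `𝕜 = ℝ` and `𝕂 = ℂ` it is the complexification of `p`. -/
noncomputable def extendScalarsSeries (p : FormalMultilinearSeries 𝕜 (ι → 𝕜) F) :
    FormalMultilinearSeries 𝕂 (ι → 𝕂) F := fun n ↦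
  ∑ s : Fin n → ι, ((ContinuousMultilinearMap.mkPiAlgebra 𝕂 (Fin n) 𝕂).compContinuousLinearMap
    fun j ↦ ContinuousLinearMap.proj (s j)).smulRight (p n fun j ↦ Pi.single (s j) 1)

lemma extendScalarsSeries_apply (p : FormalMultilinearSeries 𝕜 (ι → 𝕜) F) (n : ℕ)
    (w : Fin n → ι → 𝕂) :
    extendScalarsSeries 𝕂 p n w =
      ∑ s : Fin n → ι, (∏ j, w j (s j)) • p n fun j ↦ Pi.single (s j) 1 := by
  simp [extendScalarsSeries]

lemma norm_extendScalarsSeries_le (p : FormalMultilinearSeries 𝕜 (ι → 𝕜) F) (n : ℕ) :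
    ‖extendScalarsSeries 𝕂 p n‖ ≤ (Fintype.card ι : ℝ) ^ n * ‖p n‖ := by
  refine ContinuousMultilinearMap.opNorm_le_bound (by positivity) fun w ↦ ?_
  have norm_coeff_le (s : Fin n → ι) : ‖p n fun j ↦ Pi.single (s j) 1‖ ≤ ‖p n‖ := by
    simpa [Pi.norm_single] using (p n).le_opNorm fun j ↦ Pi.single (s j) 1
  rw [extendScalarsSeries_apply]
  calc ‖∑ s : Fin n → ι, (∏ j, w j (s j)) • p n fun j ↦ Pi.single (s j) 1‖
      ≤ ∑ s : Fin n → ι, ‖(∏ j, w j (s j)) • p n fun j ↦ Pi.single (s j) 1‖ := norm_sum_le _ _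
    _ ≤ ∑ _s : Fin n → ι, (∏ j, ‖w j‖) * ‖p n‖ := by
        gcongr with s
        rw [norm_smul, norm_prod]
        gcongr with j
        · exact norm_le_pi_norm (w j) (s j)
        · exact norm_coeff_le s
    _ = (Fintype.card ι : ℝ) ^ n * ‖p n‖ * ∏ j, ‖w j‖ := by
        simp only [Finset.sum_const, Finset.card_univ, Fintype.card_fun, Fintype.card_fin,
          nsmul_eq_mul, Nat.cast_pow]
        ring

lemma extendScalarsSeries_radius_pos {p : FormalMultilinearSeries 𝕜 (ι → 𝕜) F}
    (hp : 0 < p.radius) : 0 < (extendScalarsSeries 𝕂 p).radius := by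
  obtain ⟨C, r, hC, hr, hpn⟩ := p.le_mul_pow_of_radius_pos hp
  let ρ : NNReal := ⟨(Fintype.card ι * r + 1)⁻¹, by positivity⟩
  have hρ : Fintype.card ι * r * ρ ≤ 1 :=
    mul_inv_le_one_of_le₀ (by linarith) (by positivity)
  have hρ_pos : 0 < ρ := by
    rw [← NNReal.coe_pos]
    exact inv_pos.2 (by positivity)
  refine (ENNReal.coe_pos.2 hρ_pos).trans_le <| FormalMultilinearSeries.le_radius_of_bound _ C
    fun n ↦ ?_
  calc ‖extendScalarsSeries 𝕂 p n‖ * (ρ : ℝ) ^ n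
      ≤ (Fintype.card ι : ℝ) ^ n * (C * r ^ n) * (ρ : ℝ) ^ n := by
        gcongr
        exact (norm_extendScalarsSeries_le 𝕂 p n).trans (by gcongr; exact hpn n)
    _ = C * (Fintype.card ι * r * ρ) ^ n := by ring
    _ ≤ C := mul_le_of_le_one_right hC.le (pow_le_one₀ (by positivity) hρ)

lemma extendScalarsSeries_algebraMap_apply [NormedAlgebra 𝕜 𝕂] [IsScalarTower 𝕜 𝕂 F]
    (p : FormalMultilinearSeries 𝕜 (ι → 𝕜) F) (n : ℕ) (y : ι → 𝕜) :
    extendScalarsSeries 𝕂 p n (fun _ i ↦ algebraMap 𝕜 𝕂 (y i)) = p n fun _ ↦ y := by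
  have expand_in_basis : y = ∑ i, y i • Pi.single i 1 := by
    simp [← Pi.single_smul, Finset.univ_sum_single]
  conv_rhs => rw [expand_in_basis]
  rw [extendScalarsSeries_apply, ContinuousMultilinearMap.map_sum]
  simp only [ContinuousMultilinearMap.map_smul_univ, ← map_prod, algebraMap_smul]

end Series

theorem exists_analyticAt_extendScalars [NormedAlgebra 𝕜 𝕂] [IsScalarTower 𝕜 𝕂 F]
    [CompleteSpace F] {g : (ι → 𝕜) → F} {x : ι → 𝕜} (hg : AnalyticAt 𝕜 g x) :
    ∃ G : (ι → 𝕂) → F, AnalyticAt 𝕂 G (fun i ↦ algebraMap 𝕜 𝕂 (x i)) ∧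
      ∀ᶠ y in 𝓝 x, G (fun i ↦ algebraMap 𝕜 𝕂 (y i)) = g y := by
  classical
  obtain ⟨p, hp⟩ := hg
  have hP := (extendScalarsSeries 𝕂 p).hasFPowerSeriesOnBall
    (extendScalarsSeries_radius_pos 𝕂 hp.radius_pos)
  refine ⟨fun w ↦ (extendScalarsSeries 𝕂 p).sum (w - fun i ↦ algebraMap 𝕜 𝕂 (x i)),
    by simpa only [zero_add] using hP.analyticAt.comp_sub fun i ↦ algebraMap 𝕜 𝕂 (x i), ?_⟩
  filter_upwards [hp.eventually_hasSum_sub] with y hy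
  have sub_eq : ((fun i ↦ algebraMap 𝕜 𝕂 (y i)) - fun i ↦ algebraMap 𝕜 𝕂 (x i)) =
      fun i ↦ algebraMap 𝕜 𝕂 ((y - x) i) := by
    ext i
    simp
  simp only [sub_eq, FormalMultilinearSeries.sum, extendScalarsSeries_algebraMap_apply, hy.tsum_eq]

end ScalarExtension

section VerticalLine

lemma neg_I_mul_sub_re (z : ℂ) : -I * (z - z.re) = z.im := by
  apply Complex.ext <;> simp

variable {F : Type*} [NormedAddCommGroup F] [NormedSpace ℂ F] [CompleteSpace F]

theorem exists_analyticAt_prod_eq_of_re_eq {g : ℂ × ℝ → F} {p₀ : ℂ × ℝ}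
    (hg : AnalyticAt ℝ g p₀) :
    ∃ G : ℂ × ℂ → F, AnalyticAt ℂ G (p₀.1, (p₀.2 : ℂ)) ∧
      ∀ᶠ p in 𝓝 p₀, p.1.re = p₀.1.re → G (p.1, (p.2 : ℂ)) = g p := by
  let lineParam : (Fin 2 → ℝ) → ℂ × ℝ := fun y ↦ (p₀.1.re + y 0 * I, y 1)
  let coords : ℂ × ℝ → Fin 2 → ℝ := fun p ↦ ![p.1.im, p.2]
  let complexCoords : ℂ × ℂ → Fin 2 → ℂ := fun w ↦ ![-I * (w.1 - p₀.1.re), w.2]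
  have lineParam_coords {p : ℂ × ℝ} (hp : p.1.re = p₀.1.re) : lineParam (coords p) = p := by
    simp [lineParam, coords, ← hp, re_add_im]
  have complexCoords_eq {p : ℂ × ℝ} (hp : p.1.re = p₀.1.re) :
      complexCoords (p.1, p.2) = fun i ↦ algebraMap ℝ ℂ (coords p i) := by
    ext i
    fin_cases i
    · simpa [complexCoords, coords, ← hp] using neg_I_mul_sub_re p.1
    · rfl
  have analyticAt_lineParam : AnalyticAt ℝ lineParam (coords p₀) := by
    have analyticAt_apply (i : Fin 2) : AnalyticAt ℝ (fun y : Fin 2 → ℝ ↦ y i) (coords p₀) :=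
      (ContinuousLinearMap.proj (R := ℝ) (φ := fun _ : Fin 2 ↦ ℝ) i).analyticAt _
    have := (ofRealCLM.analyticAt _).comp (analyticAt_apply 0)
    exact (analyticAt_const.add (this.mul analyticAt_const)).prod (analyticAt_apply 1)
  have analyticAt_complexCoords : AnalyticAt ℂ complexCoords (p₀.1, p₀.2) := by
    refine analyticAt_pi_iff.2 fun i ↦ ?_
    fin_cases i
    · exact analyticAt_const.mul (analyticAt_fst.sub analyticAt_const)
    · exact analyticAt_snd
  obtain ⟨G, hG, hGg⟩ := exists_analyticAt_extendScalars ℂ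
    (hg.comp_of_eq analyticAt_lineParam (lineParam_coords rfl))
  refine ⟨G ∘ complexCoords, hG.comp_of_eq analyticAt_complexCoords (complexCoords_eq rfl), ?_⟩
  have continuous_coords : Continuous coords := by fun_prop
  filter_upwards [continuous_coords.continuousAt.eventually hGg] with p hp hre
  rw [Function.comp_apply, complexCoords_eq hre, hp, Function.comp_apply, lineParam_coords hre]

theorem exists_analyticAt_eq_of_re_eq {g : ℂ → F} {z₀ : ℂ} (hg : AnalyticAt ℝ g z₀) :
    ∃ h : ℂ → F, AnalyticAt ℂ h z₀ ∧ ∀ᶠ z in 𝓝 z₀, z.re = z₀.re → h z = g z := by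
  obtain ⟨G, hG, hGg⟩ := exists_analyticAt_prod_eq_of_re_eq (g := fun p ↦ g p.1) (p₀ := (z₀, 0))
    (hg.comp_of_eq analyticAt_fst rfl)
  refine ⟨fun z ↦ G (z, ((0 : ℝ) : ℂ)),
    hG.comp_of_eq (analyticAt_id.prod analyticAt_const) rfl, ?_⟩
  have : ContinuousAt (fun z : ℂ ↦ (z, (0 : ℝ))) z₀ := by fun_prop
  exact this.eventually hGg

end VerticalLine

section FirstIntegrals

variable {f : ℂ → ℝ} {p : ℂ × ℝ}

lemma L0_eq_of_hasFDerivAt {u : ℂ × ℝ → ℂ} {u' : ℂ × ℝ →L[ℝ] ℂ} (hu : HasFDerivAt u u' p) :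
    L0 f u p = 1 / 2 * (u' (1, 0) + I * u' (I, 0)) - I * wirtf f p.1 * u' (0, 1) := by
  rw [L0, wirt, pds, hu.fderiv]

lemma L0_comp_prodMk {G : ℂ × ℂ → ℂ} {a b : ℂ × ℝ → ℂ}
    (hG : DifferentiableAt ℂ G (a p, b p)) (ha : DifferentiableAt ℝ a p)
    (hb : DifferentiableAt ℝ b p) :
    L0 f (fun q ↦ G (a q, b q)) p = fderiv ℂ G (a p, b p) (L0 f a p, L0 f b p) := by
  have hasFDerivAt_comp := (hG.hasFDerivAt.restrictScalars ℝ).comp p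
    (ha.hasFDerivAt.prodMk hb.hasFDerivAt)
  have L0_prodMk : (L0 f a p, L0 f b p) =
      (1 / 2 : ℂ) • ((fderiv ℝ a p (1, 0), fderiv ℝ b p (1, 0)) +
        I • (fderiv ℝ a p (I, 0), fderiv ℝ b p (I, 0))) -
      (I * wirtf f p.1) • (fderiv ℝ a p (0, 1), fderiv ℝ b p (0, 1)) := rfl
  rw [L0_prodMk, map_sub, map_smul, map_smul, map_add, map_smul]
  exact L0_eq_of_hasFDerivAt hasFDerivAt_comp

lemma L0_comp_fst_of_differentiableAt {h : ℂ → ℂ} (hh : DifferentiableAt ℂ h p.1) :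
    L0 f (fun q ↦ h q.1) p = 0 := by
  have hasFDerivAt_comp := (hh.hasFDerivAt.restrictScalars ℝ).comp p
    (hasFDerivAt_fst (𝕜 := ℝ) (E := ℂ) (F := ℝ))
  have fderiv_I : fderiv ℂ h p.1 I = I * fderiv ℂ h p.1 1 := by
    rw [← smul_eq_mul, ← map_smul, smul_eq_mul, mul_one]
  refine (L0_eq_of_hasFDerivAt hasFDerivAt_comp).trans ?_
  simp [fderiv_I, ← mul_assoc]

lemma L0_sub {u w : ℂ × ℝ → ℂ} (hu : DifferentiableAt ℝ u p) (hw : DifferentiableAt ℝ w p) :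
    L0 f (fun q ↦ u q - w q) p = L0 f u p - L0 f w p := by
  rw [L0_eq_of_hasFDerivAt (hu.hasFDerivAt.fun_sub hw.hasFDerivAt), L0, L0, wirt, wirt, pds, pds]
  simp only [sub_apply]
  ring

lemma hasFDerivAt_ofReal_snd_add_I_mul (hf : DifferentiableAt ℝ f p.1) :
    HasFDerivAt (fun q : ℂ × ℝ ↦ (q.2 : ℂ) + I * f q.1)
      (ofRealCLM.comp (.snd ℝ ℂ ℝ) + I • ofRealCLM.comp ((fderiv ℝ f p.1).comp (.fst ℝ ℂ ℝ))) p :=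
  (ofRealCLM.hasFDerivAt.comp p hasFDerivAt_snd).fun_add <|
    (ofRealCLM.hasFDerivAt.comp p (hf.hasFDerivAt.comp p hasFDerivAt_fst)).const_mul I

lemma L0_ofReal_snd_add_I_mul (hf : DifferentiableAt ℝ f p.1) :
    L0 f (fun q ↦ (q.2 : ℂ) + I * f q.1) p = 0 := by
  rw [L0_eq_of_hasFDerivAt (hasFDerivAt_ofReal_snd_add_I_mul hf), wirtf]
  simp only [one_div, add_apply, ContinuousLinearMap.comp_apply, ContinuousLinearMap.coe_snd',
    ofRealCLM_apply, smul_apply, ContinuousLinearMap.coe_fst', smul_eq_mul, zero_add, ofReal_one,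
    map_zero, mul_zero, add_zero, mul_one]
  ring

/-- The function `s + i f(z) - i h(z)`. It is annihilated by `L⁰` wherever `h` is holomorphic, and
it restricts to `s` where `h` agrees with `f`. -/
noncomputable def firstIntegral (f : ℂ → ℝ) (h : ℂ → ℂ) (q : ℂ × ℝ) : ℂ :=
  q.2 + I * f q.1 - I * h q.1

variable {h : ℂ → ℂ}

lemma firstIntegral_of_eq (hp : h p.1 = f p.1) : firstIntegral f h p = p.2 := by
  simp [firstIntegral, hp]

lemma analyticAt_firstIntegral (hf : AnalyticAt ℝ f p.1) (hh : AnalyticAt ℝ h p.1) :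
    AnalyticAt ℝ (firstIntegral f h) p := by
  have hs : AnalyticAt ℝ (fun q : ℂ × ℝ ↦ (q.2 : ℂ)) p :=
    (ofRealCLM.analyticAt _).comp analyticAt_snd
  have hfz : AnalyticAt ℝ (fun q : ℂ × ℝ ↦ (f q.1 : ℂ)) p :=
    (ofRealCLM.analyticAt _).comp (hf.comp analyticAt_fst)
  exact (hs.add (analyticAt_const.mul hfz)).sub (analyticAt_const.mul (hh.comp analyticAt_fst))

lemma L0_firstIntegral (hf : DifferentiableAt ℝ f p.1) (hh : DifferentiableAt ℂ h p.1) :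
    L0 f (firstIntegral f h) p = 0 := by
  have hIh : DifferentiableAt ℂ (fun z ↦ I * h z) p.1 := hh.const_mul I
  have hIh_fst : DifferentiableAt ℝ (fun q : ℂ × ℝ ↦ I * h q.1) p :=
    (hIh.restrictScalars ℝ).comp p differentiableAt_fst
  calc L0 f (firstIntegral f h) p
      = L0 f (fun q ↦ (q.2 : ℂ) + I * f q.1) p - L0 f (fun q ↦ I * h q.1) p :=
        L0_sub (hasFDerivAt_ofReal_snd_add_I_mul hf).differentiableAt hIh_fst
    _ = 0 := by rw [L0_ofReal_snd_add_I_mul hf, L0_comp_fst_of_differentiableAt hIh, sub_zero]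

end FirstIntegrals

theorem cauchy_kovalevskaya_step_general {f : ℂ → ℝ} {g : ℂ × ℝ → ℂ} {p₀ : ℂ × ℝ}
    (hf : AnalyticAt ℝ f p₀.1) (hg : AnalyticAt ℝ g p₀) :
    ∃ U : Set (ℂ × ℝ), IsOpen U ∧ p₀ ∈ U ∧
      ∃ v : ℂ × ℝ → ℂ, (∀ p ∈ U, AnalyticAt ℝ v p) ∧ (∀ p ∈ U, L0 f v p = 0) ∧
        ∀ p ∈ U, p.1.re = p₀.1.re → v p = g p := by
  obtain ⟨h, hh, hhf⟩ := exists_analyticAt_eq_of_re_eq ((ofRealCLM.analyticAt _).comp hf)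
  obtain ⟨G, hG, hGg⟩ := exists_analyticAt_prod_eq_of_re_eq hg
  have hσ := analyticAt_firstIntegral hf hh.restrictScalars
  have hσ₀ : firstIntegral f h p₀ = p₀.2 := firstIntegral_of_eq (hhf.self_of_nhds rfl)
  rw [← hσ₀] at hG
  have hv : AnalyticAt ℝ (fun q ↦ G (q.1, firstIntegral f h q)) p₀ :=
    hG.restrictScalars.comp_of_eq (analyticAt_fst.prod hσ) rfl
  have hGσ := (continuousAt_fst.prodMk hσ.continuousAt).eventually hG.eventually_analyticAt
  obtain ⟨U, hU, hU_open, hU₀⟩ := eventually_nhds_iff.1 <|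
    hv.eventually_analyticAt.and <| hσ.eventually_analyticAt.and <| hGσ.and <| hGg.and <|
      continuousAt_fst.eventually <|
        hf.eventually_analyticAt.and <| hh.eventually_analyticAt.and hhf
  refine ⟨U, hU_open, hU₀, _, fun p hp ↦ (hU p hp).1, fun p hp ↦ ?_, fun p hp hre ↦ ?_⟩
  · obtain ⟨-, hσp, hGp, -, hfp, hhp, -⟩ := hU p hp
    have L0_fst : L0 f Prod.fst p = 0 := L0_comp_fst_of_differentiableAt differentiableAt_id
    rw [L0_comp_prodMk hGp.differentiableAt differentiableAt_fst hσp.differentiableAt, L0_fst,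
      L0_firstIntegral hfp.differentiableAt hhp.differentiableAt, Prod.mk_zero_zero, map_zero]
  · obtain ⟨-, -, -, hGp, -, -, hhp⟩ := hU p hp
    rw [firstIntegral_of_eq (hhp hre), hGp hre]

/-- Cauchy–Kovalevskaya step: for `f` real analytic near `0 ∈ ℂ` and `η` real analytic
near the origin of `ℂ × ℝ`, there is a real analytic local solution `v` of `L⁰v = 0`
with Cauchy data `v = e^η` on `{Re z = 0}`; in particular `v(0,0) = e^{η(0,0)} ≠ 0` and
`(e^η + v)(0,0) = 2·e^{η(0,0)} ≠ 0`. -/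
theorem cauchy_kovalevskaya_step (f : ℂ → ℝ)
    (Wf : Set ℂ) (hWf : IsOpen Wf) (hWf0 : (0 : ℂ) ∈ Wf)
    (hf : ∀ z ∈ Wf, AnalyticAt ℝ f z)
    (η : ℂ × ℝ → ℂ) (Wη : Set (ℂ × ℝ)) (hWη : IsOpen Wη) (hWη0 : ((0, 0) : ℂ × ℝ) ∈ Wη)
    (hη : ∀ p ∈ Wη, AnalyticAt ℝ η p) :
    ∃ U : Set (ℂ × ℝ), IsOpen U ∧ ((0, 0) : ℂ × ℝ) ∈ U ∧
      ∃ v : ℂ × ℝ → ℂ, (∀ p ∈ U, AnalyticAt ℝ v p) ∧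
        (∀ p ∈ U, L0 f v p = 0) ∧
        (∀ p ∈ U, p.1.re = 0 → v p = Complex.exp (η p)) ∧
        v ((0, 0) : ℂ × ℝ) = Complex.exp (η ((0, 0) : ℂ × ℝ)) ∧
        Complex.exp (η ((0, 0) : ℂ × ℝ)) ≠ 0 ∧
        Complex.exp (η ((0, 0) : ℂ × ℝ)) + v ((0, 0) : ℂ × ℝ)
          = 2 * Complex.exp (η ((0, 0) : ℂ × ℝ)) ∧
        (2 : ℂ) * Complex.exp (η ((0, 0) : ℂ × ℝ)) ≠ 0 := by
  obtain ⟨U, hU, hU₀, v, hv, hLv, hvη⟩ := cauchy_kovalevskaya_step_general (hf 0 hWf0)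
    (analyticAt_cexp.restrictScalars.comp (hη (0, 0) hWη0))
  have hv₀ : v (0, 0) = exp (η (0, 0)) := hvη _ hU₀ rfl
  exact ⟨U, hU, hU₀, v, hv, hLv, hvη, hv₀, exp_ne_zero _, by rw [hv₀, two_mul],
    mul_ne_zero two_ne_zero (exp_ne_zero _)⟩
end

section
/- Let f : ℂ → ℝ be real-differentiable (C¹), let g be continuous and η be real-differentiable (C¹) on a neighborhood of the origin of ℂ × ℝ, and let L be the associated operator in the variables (z,s,t). Let U be an open neighborhood of the origin in ℂ × ℝ × ℝ and v : U → ℂ a C¹ function such that the function w(z,s,t) := s + i·f(z) + t·v(z,s,t) satisfies Lw = 0 on U. Then the function u₀(z,s) := v(z,s,0)·e^{η(z,s)} is C¹ on a neighborhood of the origin of ℂ × ℝ and satisfies L⁰u₀ = −e^η·g there; in particular the equation L⁰u = e^η·g is locally solvable at the origin (with solution −u₀). -/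
/-- The Wirtinger derivative `∂̄w` in the complex variable `z` of a function
`w : ℂ × ℝ × ℝ → ℂ`. -/
noncomputable def wirt3 (w : ℂ × ℝ × ℝ → ℂ) (p : ℂ × ℝ × ℝ) : ℂ :=
  (1 / 2 : ℂ) * (fderiv ℝ w p (1, 0, 0) + Complex.I * fderiv ℝ w p (Complex.I, 0, 0))

/-- The partial derivative `∂w/∂s` of `w : ℂ × ℝ × ℝ → ℂ`. -/
noncomputable def pds3 (w : ℂ × ℝ × ℝ → ℂ) (p : ℂ × ℝ × ℝ) : ℂ :=
  fderiv ℝ w p (0, 1, 0)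

/-- The partial derivative `∂w/∂t` of `w : ℂ × ℝ × ℝ → ℂ`. -/
noncomputable def pdt3 (w : ℂ × ℝ × ℝ → ℂ) (p : ℂ × ℝ × ℝ) : ℂ :=
  fderiv ℝ w p (0, 0, 1)

/-- The operator
`Lw = ∂̄w − i·(∂̄f)·∂w/∂s + t·( g·∂w/∂s + (L⁰η)·∂w/∂t )` on functions of `(z,s,t)`. -/
noncomputable def Lop (f : ℂ → ℝ) (g η : ℂ × ℝ → ℂ) (w : ℂ × ℝ × ℝ → ℂ)
    (p : ℂ × ℝ × ℝ) : ℂ :=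
  wirt3 w p - Complex.I * wirtf f p.1 * pds3 w p
    + (p.2.2 : ℂ) * (g (p.1, p.2.1) * pds3 w p + L0 f η (p.1, p.2.1) * pdt3 w p)

/-!
Both `L⁰` and `L` are derivations. Since `L⁰` kills `s + i·f` and `Lt = t·L⁰η`, the Leibniz rule
gives `L(s + i·f + t·v) = t·(g + Lv + v·L⁰η)`. Hence `Lw = 0` forces `g + Lv + v·L⁰η = 0` wherever
`t ≠ 0`, and by continuity of the first derivatives of `v` also at `t = 0`. There `L` restricts
to `L⁰`, so that `L⁰(v e^η) = e^η·(L⁰v + v·L⁰η) = -e^η·g` on the slice `t = 0`.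
-/

open Complex Filter Topology

section L0

variable {f : ℂ → ℝ} {u v η : ℂ × ℝ → ℂ} {p : ℂ × ℝ}

theorem L0_neg (f : ℂ → ℝ) (u : ℂ × ℝ → ℂ) (p : ℂ × ℝ) :
    L0 f (fun q => -u q) p = -L0 f u p := by
  simp only [L0, wirt, pds, fderiv_fun_neg, neg_apply]
  ring

theorem L0_mul (hu : DifferentiableAt ℝ u p) (hv : DifferentiableAt ℝ v p) :
    L0 f (fun q => u q * v q) p = u p * L0 f v p + v p * L0 f u p := by
  simp only [L0, wirt, pds, fderiv_fun_mul hu hv, add_apply, smul_apply, smul_eq_mul]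
  ring

theorem L0_cexp (hη : DifferentiableAt ℝ η p) :
    L0 f (fun q => exp (η q)) p = exp (η p) * L0 f η p := by
  simp only [L0, wirt, pds, hη.hasFDerivAt.cexp.fderiv, smul_apply, smul_eq_mul]
  ring

end L0

section Lop

variable {f : ℂ → ℝ} {g η : ℂ × ℝ → ℂ} {v w : ℂ × ℝ × ℝ → ℂ} {p : ℂ × ℝ × ℝ}

theorem Lop_add (hv : DifferentiableAt ℝ v p) (hw : DifferentiableAt ℝ w p) :
    Lop f g η (fun q => v q + w q) p = Lop f g η v p + Lop f g η w p := by
  simp only [Lop, wirt3, pds3, pdt3, fderiv_fun_add hv hw, add_apply]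
  ring

theorem Lop_mul (hv : DifferentiableAt ℝ v p) (hw : DifferentiableAt ℝ w p) :
    Lop f g η (fun q => v q * w q) p = v p * Lop f g η w p + w p * Lop f g η v p := by
  simp only [Lop, wirt3, pds3, pdt3, fderiv_fun_mul hv hw, add_apply, smul_apply, smul_eq_mul]
  ring

theorem hasFDerivAt_ofReal_snd_fst (p : ℂ × ℝ × ℝ) :
    HasFDerivAt (fun q : ℂ × ℝ × ℝ => (q.2.1 : ℂ))
      (ofRealCLM ∘L .fst ℝ ℝ ℝ ∘L .snd ℝ ℂ (ℝ × ℝ)) p :=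
  (ofRealCLM ∘L .fst ℝ ℝ ℝ ∘L .snd ℝ ℂ (ℝ × ℝ)).hasFDerivAt

theorem hasFDerivAt_ofReal_snd_snd (p : ℂ × ℝ × ℝ) :
    HasFDerivAt (fun q : ℂ × ℝ × ℝ => (q.2.2 : ℂ))
      (ofRealCLM ∘L .snd ℝ ℝ ℝ ∘L .snd ℝ ℂ (ℝ × ℝ)) p :=
  (ofRealCLM ∘L .snd ℝ ℝ ℝ ∘L .snd ℝ ℂ (ℝ × ℝ)).hasFDerivAt

theorem hasFDerivAt_s_add_I_mul_f (hf : DifferentiableAt ℝ f p.1) :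
    HasFDerivAt (fun q : ℂ × ℝ × ℝ => (q.2.1 : ℂ) + I * (f q.1 : ℂ))
      (ofRealCLM ∘L .fst ℝ ℝ ℝ ∘L .snd ℝ ℂ (ℝ × ℝ) +
        I • (ofRealCLM ∘L fderiv ℝ f p.1 ∘L .fst ℝ ℂ (ℝ × ℝ))) p := by
  have hfst : HasFDerivAt (fun q : ℂ × ℝ × ℝ => (f q.1 : ℂ))
      (ofRealCLM ∘L fderiv ℝ f p.1 ∘L .fst ℝ ℂ (ℝ × ℝ)) p :=
    ofRealCLM.hasFDerivAt.comp p (hf.hasFDerivAt.comp p hasFDerivAt_fst)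
  exact (hasFDerivAt_ofReal_snd_fst p).add (hfst.const_mul I)

theorem Lop_s_add_I_mul_f (hf : DifferentiableAt ℝ f p.1) :
    Lop f g η (fun q => (q.2.1 : ℂ) + I * (f q.1 : ℂ)) p = p.2.2 * g (p.1, p.2.1) := by
  simp only [Lop, wirt3, pds3, pdt3, wirtf, (hasFDerivAt_s_add_I_mul_f hf).fderiv, add_apply,
    smul_apply, smul_eq_mul, ContinuousLinearMap.comp_apply, ContinuousLinearMap.coe_fst',
    ContinuousLinearMap.coe_snd', ofRealCLM_apply, ofReal_one, map_zero]
  ring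

theorem Lop_t (f : ℂ → ℝ) (g η : ℂ × ℝ → ℂ) (p : ℂ × ℝ × ℝ) :
    Lop f g η (fun q => (q.2.2 : ℂ)) p = p.2.2 * L0 f η (p.1, p.2.1) := by
  simp [Lop, wirt3, pds3, pdt3, (hasFDerivAt_ofReal_snd_snd p).fderiv]

theorem Lop_extension (hf : DifferentiableAt ℝ f p.1) (hv : DifferentiableAt ℝ v p) :
    Lop f g η (fun q => ((q.2.1 : ℂ) + I * (f q.1 : ℂ)) + (q.2.2 : ℂ) * v q) p =
      p.2.2 * (g (p.1, p.2.1) + Lop f g η v p + v p * L0 f η (p.1, p.2.1)) := by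
  have ht := (hasFDerivAt_ofReal_snd_snd p).differentiableAt
  rw [Lop_add (hasFDerivAt_s_add_I_mul_f hf).differentiableAt (ht.fun_mul hv), Lop_mul ht hv,
    Lop_s_add_I_mul_f hf, Lop_t]
  ring

theorem continuousAt_Lop_vertical {z : ℂ} {s t : ℝ} (hv : ContDiffAt ℝ 1 v (z, s, t)) :
    ContinuousAt (fun τ : ℝ => Lop f g η v (z, s, τ)) t := by
  have hline : ContinuousAt (fun τ : ℝ => (z, s, τ)) t := by fun_prop
  have hfderiv (h : ℂ × ℝ × ℝ) : ContinuousAt (fun τ : ℝ => fderiv ℝ v (z, s, τ) h) t :=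
    ((hv.continuousAt_fderiv one_ne_zero).comp_of_eq hline rfl).clm_apply continuousAt_const
  simp only [Lop, wirt3, pds3, pdt3]
  fun_prop

end Lop

section Slice

variable {f : ℂ → ℝ} {g η : ℂ × ℝ → ℂ} {v : ℂ × ℝ × ℝ → ℂ} {p : ℂ × ℝ}

theorem hasFDerivAt_slice (hv : DifferentiableAt ℝ v (p.1, p.2, 0)) :
    HasFDerivAt (fun q : ℂ × ℝ => v (q.1, q.2, 0))
      (fderiv ℝ v (p.1, p.2, 0) ∘L (.prod (.fst ℝ ℂ ℝ) (.prod (.snd ℝ ℂ ℝ) 0))) p :=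
  HasFDerivAt.comp p (f := fun q : ℂ × ℝ => (q.1, q.2, (0 : ℝ))) hv.hasFDerivAt
    (hasFDerivAt_fst.prodMk (hasFDerivAt_snd.prodMk (hasFDerivAt_const 0 p)))

theorem L0_slice (g η : ℂ × ℝ → ℂ) (hv : DifferentiableAt ℝ v (p.1, p.2, 0)) :
    L0 f (fun q => v (q.1, q.2, 0)) p = Lop f g η v (p.1, p.2, 0) := by
  simp [L0, wirt, pds, Lop, wirt3, pds3, (hasFDerivAt_slice hv).fderiv]

theorem L0_slice_mul_cexp (g : ℂ × ℝ → ℂ) (hv : DifferentiableAt ℝ v (p.1, p.2, 0))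
    (hη : DifferentiableAt ℝ η p) :
    L0 f (fun q => v (q.1, q.2, 0) * exp (η q)) p =
      exp (η p) * (Lop f g η v (p.1, p.2, 0) + v (p.1, p.2, 0) * L0 f η p) := by
  rw [L0_mul (hasFDerivAt_slice hv).differentiableAt hη.cexp, L0_cexp hη, L0_slice g η hv]
  ring

theorem add_Lop_add_mul_L0_eq_zero_of_Lop_extension_eq_zero (hf : DifferentiableAt ℝ f p.1)
    (hv : ContDiffAt ℝ 1 v (p.1, p.2, 0))
    (hw : ∀ᶠ q in 𝓝 (p.1, p.2, 0), Lop f g η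
      (fun q => ((q.2.1 : ℂ) + I * (f q.1 : ℂ)) + (q.2.2 : ℂ) * v q) q = 0) :
    g p + Lop f g η v (p.1, p.2, 0) + v (p.1, p.2, 0) * L0 f η p = 0 := by
  have hline : ContinuousAt (fun t : ℝ => (p.1, p.2, t)) 0 := by fun_prop
  have hvline : ContinuousAt (fun t : ℝ => v (p.1, p.2, t)) 0 :=
    hv.continuousAt.comp_of_eq hline rfl
  have hcont : ContinuousAt
      (fun t : ℝ => g p + Lop f g η v (p.1, p.2, t) + v (p.1, p.2, t) * L0 f η p) 0 :=
    (continuousAt_const.add (continuousAt_Lop_vertical hv)).add (hvline.mul continuousAt_const)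
  have hdiff : ∀ᶠ q in 𝓝 (p.1, p.2, (0 : ℝ)), DifferentiableAt ℝ v q :=
    (hv.eventually (by simp)).mono fun _ hq => hq.differentiableAt one_ne_zero
  have hzero : ∀ᶠ t in 𝓝[≠] (0 : ℝ),
      g p + Lop f g η v (p.1, p.2, t) + v (p.1, p.2, t) * L0 f η p = 0 := by
    filter_upwards [(hline.eventually (hw.and hdiff)).filter_mono nhdsWithin_le_nhds,
      self_mem_nhdsWithin] with t ⟨hwt, hvt⟩ ht
    rw [Lop_extension hf hvt] at hwt
    exact (mul_eq_zero.mp hwt).resolve_left (ofReal_ne_zero.mpr ht)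
  exact tendsto_nhds_unique_of_eventuallyEq (hcont.tendsto.mono_left nhdsWithin_le_nhds)
    tendsto_const_nhds hzero

theorem L0_slice_mul_cexp_of_Lop_extension_eq_zero (hf : DifferentiableAt ℝ f p.1)
    (hη : DifferentiableAt ℝ η p) (hv : ContDiffAt ℝ 1 v (p.1, p.2, 0))
    (hw : ∀ᶠ q in 𝓝 (p.1, p.2, 0), Lop f g η
      (fun q => ((q.2.1 : ℂ) + I * (f q.1 : ℂ)) + (q.2.2 : ℂ) * v q) q = 0) :
    L0 f (fun q => v (q.1, q.2, 0) * exp (η q)) p = -(exp (η p) * g p) := by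
  rw [L0_slice_mul_cexp g (hv.differentiableAt one_ne_zero) hη]
  linear_combination exp (η p) * add_Lop_add_mul_L0_eq_zero_of_Lop_extension_eq_zero hf hv hw

theorem contDiffOn_slice_mul_cexp {n : WithTop ℕ∞} {U : Set (ℂ × ℝ × ℝ)} {W : Set (ℂ × ℝ)}
    (hv : ContDiffOn ℝ n v U) (hη : ContDiffOn ℝ n η W) :
    ContDiffOn ℝ n (fun p => v (p.1, p.2, 0) * exp (η p))
      (W ∩ (fun p => (p.1, p.2, 0)) ⁻¹' U) := by
  have hslice : ContDiff ℝ n (fun p : ℂ × ℝ => (p.1, p.2, (0 : ℝ))) := by fun_prop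
  exact (hv.comp hslice.contDiffOn fun _ hp => hp.2).mul (hη.mono Set.inter_subset_left).cexp

end Slice

theorem locSolv_of_L0_eq_neg {f : ℂ → ℝ} {G u : ℂ × ℝ → ℂ} {W : Set (ℂ × ℝ)} (hW : IsOpen W)
    (hW0 : (0, 0) ∈ W) (hu : ContDiffOn ℝ 1 u W) (hL : ∀ p ∈ W, L0 f u p = -G p) :
    LocSolv f G :=
  ⟨W, hW, hW0, fun p => -u p, hu.neg, fun p hp => by rw [L0_neg, hL p hp, neg_neg]⟩

theorem solvable_of_extension_general (f : ℂ → ℝ) (hf : Differentiable ℝ f)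
    (g η : ℂ × ℝ → ℂ) (W : Set (ℂ × ℝ)) (hW : IsOpen W) (hW0 : ((0, 0) : ℂ × ℝ) ∈ W)
    (hη : ContDiffOn ℝ 1 η W)
    (U : Set (ℂ × ℝ × ℝ)) (hU : IsOpen U) (hU0 : ((0, 0, 0) : ℂ × ℝ × ℝ) ∈ U)
    (v : ℂ × ℝ × ℝ → ℂ) (hv : ContDiffOn ℝ 1 v U)
    (hw : ∀ p ∈ U, Lop f g η
      (fun q => ((q.2.1 : ℂ) + I * (f q.1 : ℂ)) + (q.2.2 : ℂ) * v q) p = 0) :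
    ∃ W' : Set (ℂ × ℝ), IsOpen W' ∧ ((0, 0) : ℂ × ℝ) ∈ W' ∧
      ContDiffOn ℝ 1 (fun p : ℂ × ℝ => v (p.1, p.2, 0) * exp (η p)) W' ∧
      (∀ p ∈ W', L0 f (fun q : ℂ × ℝ => v (q.1, q.2, 0) * exp (η q)) p =
        -(exp (η p) * g p)) ∧
      LocSolv f (fun p => exp (η p) * g p) := by
  have hopen : IsOpen (W ∩ (fun p : ℂ × ℝ => (p.1, p.2, (0 : ℝ))) ⁻¹' U) :=
    hW.inter (hU.preimage (by fun_prop))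
  have hu := contDiffOn_slice_mul_cexp hv hη
  have hL : ∀ p ∈ W ∩ (fun p : ℂ × ℝ => (p.1, p.2, (0 : ℝ))) ⁻¹' U,
      L0 f (fun q => v (q.1, q.2, 0) * exp (η q)) p = -(exp (η p) * g p) := by
    rintro p ⟨hpW, hpU⟩
    have hηp := (hη.contDiffAt (hW.mem_nhds hpW)).differentiableAt one_ne_zero
    exact L0_slice_mul_cexp_of_Lop_extension_eq_zero (hf p.1) hηp
      (hv.contDiffAt (hU.mem_nhds hpU)) (eventually_of_mem (hU.mem_nhds hpU) hw)
  exact ⟨_, hopen, ⟨hW0, hU0⟩, hu, hL, locSolv_of_L0_eq_neg hopen ⟨hW0, hU0⟩ hu hL⟩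

/-- If `w(z,s,t) = s + i·f(z) + t·v(z,s,t)` satisfies `Lw = 0` near the origin for a `C¹`
function `v`, then `u₀(z,s) = v(z,s,0)·e^{η(z,s)}` is `C¹` near the origin and satisfies
`L⁰u₀ = −e^η·g`; in particular `L⁰u = e^η·g` is locally solvable at the origin. -/
theorem solvable_of_extension (f : ℂ → ℝ) (hf : ContDiff ℝ 1 f)
    (g η : ℂ × ℝ → ℂ) (W : Set (ℂ × ℝ)) (hW : IsOpen W) (hW0 : ((0, 0) : ℂ × ℝ) ∈ W)
    (hg : ContinuousOn g W) (hη : ContDiffOn ℝ 1 η W)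
    (U : Set (ℂ × ℝ × ℝ)) (hU : IsOpen U) (hU0 : ((0, 0, 0) : ℂ × ℝ × ℝ) ∈ U)
    (v : ℂ × ℝ × ℝ → ℂ) (hv : ContDiffOn ℝ 1 v U)
    (hw : ∀ p ∈ U, Lop f g η
      (fun q => ((q.2.1 : ℂ) + Complex.I * (f q.1 : ℂ)) + (q.2.2 : ℂ) * v q) p = 0) :
    ∃ W' : Set (ℂ × ℝ), IsOpen W' ∧ ((0, 0) : ℂ × ℝ) ∈ W' ∧
      ContDiffOn ℝ 1 (fun p : ℂ × ℝ => v (p.1, p.2, 0) * Complex.exp (η p)) W' ∧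
      (∀ p ∈ W', L0 f (fun q : ℂ × ℝ => v (q.1, q.2, 0) * Complex.exp (η q)) p
        = -(Complex.exp (η p) * g p)) ∧
      LocSolv f (fun p => Complex.exp (η p) * g p) :=
  solvable_of_extension_general f (hf.differentiable one_ne_zero) g η W hW hW0 hη U hU hU0 v hv hw
end

section
/- (Proposition: non-extension example, existential form.) There exist a smooth function C : ℂ × ℝ × ℝ → ℂ, a real analytic function D : ℂ × ℝ × ℝ → ℂ, and a real analytic function h : ℂ × ℝ → ℂ with the following properties. Define the operator L on real-differentiable functions w of (z,s,t) ∈ ℂ × ℝ × ℝ by (Lw)(z,s,t) = ∂̄w(z,s,t) + C(z,s,t)·(∂w/∂s)(z,s,t) + t·D(z,s,t)·(∂w/∂t)(z,s,t), and define L⁰ on real-differentiable functions u of (z,s) by (L⁰u)(z,s) = ∂̄u(z,s) + C(z,s,0)·(∂u/∂s)(z,s). Then L⁰h = 0 on a neighborhood of the origin of ℂ × ℝ, yet there is no pair (U, v) consisting of an open neighborhood U of the origin in ℂ × ℝ × ℝ and a C¹ function v : U → ℂ such that L applied to the function (z,s,t) ↦ h(z,s) + t·v(z,s,t) vanishes identically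 on U. -/
/-- The operator `Lw = ∂̄w + C·∂w/∂s + t·D·∂w/∂t` on functions of `(z,s,t)`. -/
noncomputable def Lgen (C D : ℂ × ℝ × ℝ → ℂ) (w : ℂ × ℝ × ℝ → ℂ) (p : ℂ × ℝ × ℝ) : ℂ :=
  wirt3 w p + C p * pds3 w p + (p.2.2 : ℂ) * D p * pdt3 w p

/-- The operator `L⁰u = ∂̄u + C(z,s,0)·∂u/∂s` on functions of `(z,s)`. -/
noncomputable def L0gen (C : ℂ × ℝ × ℝ → ℂ) (u : ℂ × ℝ → ℂ) (p : ℂ × ℝ) : ℂ :=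
  wirt u p + C (p.1, p.2, 0) * pds u p

/-!
Take `D = 0`, `h(z, s) = s + i |z|²` and `C(z, s, t) = -i z - t ψ'(s)`, where `ψ` is smooth,
vanishes for `s ≤ 0` and is positive for `s > 0`. Then `L⁰` is the Lewy operator `∂̄ - i z ∂/∂s`,
which annihilates `h`, and the `t`-derivative at `t = 0` of `L(h + t v) = 0` says that
`u = v(·, ·, 0)` solves `L⁰ u = ψ'(s)`.

Lewy's argument excludes this. The equation for `u` makes the function
`V(s + i r²) = ∮_{|z| = r} u(z, s) dz + 2π ψ(s)` holomorphic for `r > 0`, and `V` extends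
continuously to `r = 0`, where it equals `2π ψ(s)`. Since this boundary value vanishes for `s < 0`,
`V` vanishes identically, and so does `ψ` near `0`.
-/

open Complex Set Filter Topology
open scoped ComplexConjugate Real

/-- The open axis-parallel square with centre `c` and half side `r`, on which a boundary
uniqueness principle is proved by symmetry. -/
def openSquare (c : ℂ) (r : ℝ) : Set ℂ :=
  Ioo (c.re - r) (c.re + r) ×ℂ Ioo (c.im - r) (c.im + r)

/-- The rotation of the plane by a right angle about `c`, a symmetry of `openSquare c r` whose
iterates bring each side to the bottom. -/
noncomputable def quarterTurn (c z : ℂ) : ℂ :=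
  c + I * (z - c)

section Square

variable {c : ℂ} {r : ℝ}

lemma quarterTurn_re (c z : ℂ) : (quarterTurn c z).re = c.re - (z.im - c.im) := by
  simp [quarterTurn, sub_eq_add_neg]

lemma quarterTurn_im (c z : ℂ) : (quarterTurn c z).im = c.im + (z.re - c.re) := by
  simp [quarterTurn]

lemma quarterTurn_self (c : ℂ) : quarterTurn c c = c := by
  simp [quarterTurn]

lemma mapsTo_quarterTurn_openSquare (c : ℂ) (r : ℝ) :
    MapsTo (quarterTurn c) (openSquare c r) (openSquare c r) := by
  rintro z ⟨⟨_, _⟩, ⟨_, _⟩⟩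
  refine ⟨⟨?_, ?_⟩, ⟨?_, ?_⟩⟩ <;> simp only [quarterTurn_re, quarterTurn_im] <;> linarith

lemma isOpen_openSquare (c : ℂ) (r : ℝ) : IsOpen (openSquare c r) :=
  isOpen_Ioo.reProdIm isOpen_Ioo

lemma self_mem_openSquare (hr : 0 < r) : c ∈ openSquare c r :=
  ⟨⟨by linarith, by linarith⟩, ⟨by linarith, by linarith⟩⟩

lemma closure_openSquare (hr : 0 < r) :
    closure (openSquare c r) = Icc (c.re - r) (c.re + r) ×ℂ Icc (c.im - r) (c.im + r) := by
  rw [openSquare, closure_reProdIm, closure_Ioo (by linarith), closure_Ioo (by linarith)]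

lemma exists_quarterTurn_iterate_im_eq_of_mem_frontier (hr : 0 < r) {z : ℂ}
    (hz : z ∈ frontier (openSquare c r)) :
    ∃ k < 4, ((quarterTurn c)^[k] z).im = c.im - r := by
  rw [openSquare, frontier_reProdIm, frontier_Ioo (by linarith), frontier_Ioo (by linarith)] at hz
  obtain ⟨-, bottom | top⟩ | ⟨left | right, -⟩ := hz
  · exact ⟨0, by norm_num, bottom⟩
  · refine ⟨2, by norm_num, ?_⟩
    have : z.im = c.im + r := top
    simp only [Function.iterate_succ, Function.iterate_zero, Function.comp_apply, id,
      quarterTurn_im, quarterTurn_re]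
    linarith
  · refine ⟨1, by norm_num, ?_⟩
    have : z.re = c.re - r := left
    simp only [Function.iterate_one, quarterTurn_im]
    linarith
  · refine ⟨3, by norm_num, ?_⟩
    have : z.re = c.re + r := right
    simp only [Function.iterate_succ, Function.iterate_zero, Function.comp_apply, id,
      quarterTurn_im, quarterTurn_re]
    linarith

lemma diffContOnCl_comp_quarterTurn_iterate {V : ℂ → ℂ} (hV : DiffContOnCl ℂ V (openSquare c r))
    (k : ℕ) : DiffContOnCl ℂ (V ∘ (quarterTurn c)^[k]) (openSquare c r) := by
  have hturn : Differentiable ℂ (quarterTurn c) := by unfold quarterTurn; fun_prop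
  exact hV.comp (hturn.iterate k).diffContOnCl ((mapsTo_quarterTurn_openSquare c r).iterate k)

/-- The product of the four rotations of `V` about `c` vanishes on all sides, hence everywhere
by the maximum principle; its value at `c` is `V c ^ 4`. -/
lemma eq_zero_of_diffContOnCl_openSquare_of_bottom {V : ℂ → ℂ} (hr : 0 < r)
    (hV : DiffContOnCl ℂ V (openSquare c r))
    (hbottom : ∀ z ∈ closure (openSquare c r), z.im = c.im - r → V z = 0) : V c = 0 := by
  have hmaps (k : ℕ) : MapsTo (quarterTurn c)^[k] (closure (openSquare c r))
      (closure (openSquare c r)) :=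
    ((mapsTo_quarterTurn_openSquare c r).closure
      (by unfold quarterTurn; fun_prop)).iterate k
  set rotated : ℕ → ℂ → ℂ := fun k => V ∘ (quarterTurn c)^[k]
  have hrot (k : ℕ) : DiffContOnCl ℂ (rotated k) (openSquare c r) :=
    diffContOnCl_comp_quarterTurn_iterate hV k
  have hprod : DiffContOnCl ℂ (rotated 0 • rotated 1 • rotated 2 • rotated 3) (openSquare c r) :=
    (hrot 0).smul ((hrot 1).smul ((hrot 2).smul (hrot 3)))
  have hfrontier : ∀ z ∈ frontier (openSquare c r),
      ‖(rotated 0 • rotated 1 • rotated 2 • rotated 3) z‖ ≤ 0 := by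
    intro z hz
    obtain ⟨k, hk, him⟩ := exists_quarterTurn_iterate_im_eq_of_mem_frontier hr hz
    have hzero : rotated k z = 0 := hbottom _ (hmaps k (frontier_subset_closure hz)) him
    interval_cases k <;> simp [hzero]
  have hbounded : Bornology.IsBounded (openSquare c r) :=
    (Metric.isBounded_Ioo _ _).reProdIm (Metric.isBounded_Ioo _ _)
  have hle := norm_le_of_forall_mem_frontier_norm_le hbounded hprod hfrontier
    (subset_closure (self_mem_openSquare hr))
  simpa [rotated, quarterTurn_self] using norm_le_zero_iff.1 hle

end Square

section Rectangle

variable {V : ℂ → ℂ} {a b a' b' c d : ℝ}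

lemma eq_zero_of_openSquare_over_bottom (hV : DiffContOnCl ℂ V (Ioo a b ×ℂ Ioo c d))
    (hsub : Ioo a' b' ⊆ Ioo a b) (hbottom : ∀ x ∈ Ioo a' b', V ⟨x, c⟩ = 0) {z : ℂ}
    (hc : c < z.im) (hd : 2 * (z.im - c) < d - c) (ha' : a' < z.re - (z.im - c))
    (hb' : z.re + (z.im - c) < b') : V z = 0 := by
  refine eq_zero_of_diffContOnCl_openSquare_of_bottom (sub_pos.2 hc) (hV.mono ?_) ?_
  · rintro ζ ⟨⟨_, _⟩, ⟨_, _⟩⟩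
    exact ⟨hsub ⟨by linarith, by linarith⟩, ⟨by linarith, by linarith⟩⟩
  · intro ζ hζ hζim
    rw [closure_openSquare (sub_pos.2 hc)] at hζ
    obtain ⟨⟨_, _⟩, -⟩ := hζ
    rw [show ζ = ⟨ζ.re, c⟩ from Complex.ext rfl (by linarith)]
    exact hbottom _ ⟨by linarith, by linarith⟩

lemma eqOn_zero_of_diffContOnCl_rectangle_of_bottom
    (hV : DiffContOnCl ℂ V (Ioo a b ×ℂ Ioo c d)) (hcd : c < d) (hab' : a' < b')
    (hsub : Ioo a' b' ⊆ Ioo a b) (hbottom : ∀ x ∈ Ioo a' b', V ⟨x, c⟩ = 0) :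
    EqOn V 0 (closure (Ioo a b ×ℂ Ioo c d)) := by
  obtain ⟨η, hη, hηlt⟩ : ∃ η > 0, η < min ((d - c) / 4) ((b' - a') / 6) :=
    exists_between (lt_min (by linarith) (by linarith))
  obtain ⟨hηd, hηb⟩ := lt_min_iff.1 hηlt
  obtain ⟨z₀, hre, him⟩ : ∃ z₀ : ℂ, z₀.re = (a' + b') / 2 ∧ z₀.im = c + η :=
    ⟨⟨(a' + b') / 2, c + η⟩, rfl, rfl⟩
  have hz₀ : z₀ ∈ Ioo a b ×ℂ Ioo c d :=
    ⟨hsub ⟨by linarith, by linarith⟩, ⟨by linarith, by linarith⟩⟩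
  have hlocal : V =ᶠ[𝓝 z₀] 0 := by
    filter_upwards [(isOpen_openSquare z₀ η).mem_nhds (self_mem_openSquare hη)]
    rintro z ⟨⟨_, _⟩, ⟨_, _⟩⟩
    apply eq_zero_of_openSquare_over_bottom hV hsub hbottom <;> linarith
  have hconvex : Convex ℝ (Ioo a b ×ℂ Ioo c d) :=
    ((convex_Ioo a b).linear_preimage reLm).inter ((convex_Ioo c d).linear_preimage imLm)
  have hanalytic := hV.differentiableOn.analyticOnNhd (isOpen_Ioo.reProdIm isOpen_Ioo)
  have hinterior := hanalytic.eqOn_zero_of_preconnected_of_eventuallyEq_zero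
    hconvex.isPreconnected hz₀ hlocal
  exact hinterior.of_subset_closure hV.continuousOn continuousOn_const subset_closure subset_rfl

end Rectangle

lemma eventually_ofReal_eq_zero_of_eventually_nhdsLT {V : ℂ → ℂ} (hV : Continuous V)
    (hd : ∀ᶠ w in 𝓝 (0 : ℂ), 0 < w.im → DifferentiableAt ℂ V w)
    (hneg : ∀ᶠ s : ℝ in 𝓝[<] 0, V s = 0) : ∀ᶠ s : ℝ in 𝓝 0, V s = 0 := by
  obtain ⟨ε, hε, hball⟩ := Metric.eventually_nhds_iff.1 hd
  obtain ⟨l, hl, hzero⟩ := mem_nhdsLT_iff_exists_Ioo_subset.1 hneg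
  have hl : l < 0 := hl
  have hrect : DiffContOnCl ℂ V (Ioo (-(ε / 2)) (ε / 2) ×ℂ Ioo 0 (ε / 2)) := by
    refine ⟨fun w hw => (hball ?_ hw.2.1).differentiableWithinAt, hV.continuousOn⟩
    have hre : |w.re| < ε / 2 := abs_lt.2 hw.1
    have him : |w.im| < ε / 2 := abs_lt.2 ⟨by linarith [hw.2.1], hw.2.2⟩
    rw [dist_zero_right]
    linarith [norm_le_abs_re_add_abs_im w]
  have hvanish := eqOn_zero_of_diffContOnCl_rectangle_of_bottom hrect (by linarith)
    (max_lt hl (by linarith : -(ε / 2) < 0))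
    (Ioo_subset_Ioo (le_max_right _ _) (by linarith))
    (fun x hx => hzero ⟨(le_max_left _ _).trans_lt hx.1, hx.2⟩)
  filter_upwards [Ioo_mem_nhds (by linarith : -(ε / 2) < 0) (by linarith : 0 < ε / 2)] with s hs
  apply hvanish
  rw [closure_reProdIm, closure_Ioo (by linarith), closure_Ioo (by linarith)]
  exact ⟨Ioo_subset_Icc_self hs, left_mem_Icc.2 (by linarith)⟩

section ParametricIntegral

variable {E F : Type*} [NormedAddCommGroup E] [NormedSpace ℝ E] [ProperSpace E]
  [NormedAddCommGroup F] [NormedSpace ℝ F]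

lemma hasFDerivAt_intervalIntegral_of_contDiff {k : E × ℝ → F} (hk : ContDiff ℝ 1 k)
    (a b : ℝ) (x₀ : E) :
    HasFDerivAt (fun x => ∫ t in a..b, k (x, t))
      (∫ t in a..b, (fderiv ℝ k (x₀, t)).comp (ContinuousLinearMap.inl ℝ E ℝ)) x₀ := by
  have hk' : Continuous fun q : E × ℝ =>
      (fderiv ℝ k q).comp (ContinuousLinearMap.inl ℝ E ℝ) :=
    (hk.continuous_fderiv one_ne_zero).clm_comp continuous_const
  have hslice (x : E) : Continuous fun t => k (x, t) := hk.continuous.comp (by fun_prop)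
  obtain ⟨M, hM⟩ := ((isCompact_closedBall x₀ 1).prod
    (isCompact_uIcc (a := a) (b := b))).exists_bound_of_continuousOn hk'.continuousOn
  refine intervalIntegral.hasFDerivAt_integral_of_dominated_of_fderiv_le
    (F' := fun x t => (fderiv ℝ k (x, t)).comp (ContinuousLinearMap.inl ℝ E ℝ))
    (bound := fun _ => M) (Metric.closedBall_mem_nhds x₀ one_pos)
    (.of_forall fun x => (hslice x).aestronglyMeasurable)
    ((hslice x₀).intervalIntegrable _ _)
    (hk'.comp (by fun_prop : Continuous fun t : ℝ => (x₀, t))).aestronglyMeasurable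
    (.of_forall fun t ht x hx => hM (x, t) ⟨hx, uIoc_subset_uIcc ht⟩)
    (continuous_const.intervalIntegrable _ _)
    (.of_forall fun t _ x _ => ?_)
  exact (hk.differentiable one_ne_zero (x, t)).hasFDerivAt.comp x (hasFDerivAt_prodMk_left x t)

end ParametricIntegral

lemma I_mul_map_sub_map_I_mul (B : ℂ →ₗ[ℝ] ℂ) (z : ℂ) :
    I * B z - B (I * z) = I * conj z * (B 1 + I * B I) := by
  have hB (w : ℂ) : B w = w.re * B 1 + w.im * B I := by
    rw [← real_smul, ← real_smul, ← map_smul, ← map_smul, ← map_add]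
    simp
  have hconj : conj z = z.re - z.im * I := by apply Complex.ext <;> simp
  rw [hB z, hB (I * z), I_mul_re, I_mul_im, hconj, ofReal_neg]
  linear_combination (-z.re * B I + z.im * B 1 + z.im * I * B I) * I_sq

section CircleIntegral

/-- The integrand, in the angle `q.2`, of `∮ z in C(0, r), u (z, s)` for `(r, s) = q.1`. -/
noncomputable def circleIntegrand (u : ℂ × ℝ → ℂ) (q : (ℝ × ℝ) × ℝ) : ℂ :=
  circleMap 0 q.1.1 q.2 * I * u (circleMap 0 q.1.1 q.2, q.1.2)

variable {u : ℂ × ℝ → ℂ}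

lemma circleIntegral_eq_intervalIntegral_circleIntegrand (u : ℂ × ℝ → ℂ) (r s : ℝ) :
    (∮ z in C(0, r), u (z, s)) = ∫ θ in 0..2 * π, circleIntegrand u ((r, s), θ) := by
  simp only [circleIntegral, deriv_circleMap, smul_eq_mul, circleIntegrand]

lemma contDiff_circleIntegrand (hu : ContDiff ℝ 1 u) : ContDiff ℝ 1 (circleIntegrand u) := by
  have hofReal : ContDiff ℝ 1 ((↑) : ℝ → ℂ) := ofRealCLM.contDiff
  unfold circleIntegrand
  simp only [circleMap_zero]
  fun_prop

lemma fderiv_circleIntegrand (hu : ContDiff ℝ 1 u) (r s θ a b : ℝ) :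
    fderiv ℝ (circleIntegrand u) ((r, s), θ) ((a, b), 0) =
      circleMap 0 a θ * I * u (circleMap 0 r θ, s) +
        circleMap 0 r θ * I * fderiv ℝ u (circleMap 0 r θ, s) (circleMap 0 a θ, b) := by
  let ray : ℝ × ℝ →L[ℝ] ℂ := (ContinuousLinearMap.fst ℝ ℝ ℝ).smulRight (exp (θ * I))
  have hray (p : ℝ × ℝ) : ray p = circleMap 0 p.1 θ := by simp [ray, circleMap_zero]
  have hintegrand :=
    ((contDiff_circleIntegrand hu).differentiable one_ne_zero ((r, s), θ)).hasFDerivAt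
  have hslice := hintegrand.comp (r, s) (f := fun p => (p, θ)) (hasFDerivAt_prodMk_left (r, s) θ)
  simp only [Function.comp_def, circleIntegrand, ← hray] at hslice
  have hproduct := (ray.hasFDerivAt (x := (r, s)).mul_const I).mul
    ((hu.differentiable one_ne_zero (ray (r, s), s)).hasFDerivAt.comp (r, s)
      (ray.prod (ContinuousLinearMap.snd ℝ ℝ ℝ)).hasFDerivAt)
  have heq := DFunLike.congr_fun (hslice.unique hproduct) (a, b)
  simp only [ContinuousLinearMap.comp_apply, ContinuousLinearMap.inl_apply, hray,
    Function.comp_apply, ContinuousLinearMap.prod_apply, ContinuousLinearMap.coe_snd', add_apply,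
    smul_apply, smul_eq_mul] at heq
  linear_combination heq

/-- Green's formula in infinitesimal form: the radial derivative of the integrand is
`2 i r ∂̄u` up to an exact angular derivative, which integrates to zero over the circle. -/
lemma hasDerivAt_circleMap_one_mul (hu : ContDiff ℝ 1 u) (r s θ : ℝ) :
    HasDerivAt (fun θ => circleMap 0 1 θ * u (circleMap 0 r θ, s))
      (fderiv ℝ (circleIntegrand u) ((r, s), θ) ((1, 0), 0) -
        2 * I * r * wirt u (circleMap 0 r θ, s)) θ := by
  have hpoint : HasDerivAt (fun θ => (circleMap 0 r θ, s)) (circleMap 0 r θ * I, 0) θ :=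
    (hasDerivAt_circleMap 0 r θ).prodMk (hasDerivAt_const θ s)
  have hproduct := (hasDerivAt_circleMap 0 1 θ).mul
    ((hu.differentiable one_ne_zero (circleMap 0 r θ, s)).hasFDerivAt.comp_hasDerivAt θ hpoint)
  refine hproduct.congr_deriv ?_
  have hcircle : circleMap 0 r θ = r * circleMap 0 1 θ := by simp [circleMap_zero]
  have hunit : circleMap 0 1 θ * conj (circleMap 0 1 θ) = 1 := by
    rw [mul_conj, normSq_eq_norm_sq]; simp
  set B : ℂ →ₗ[ℝ] ℂ :=
    ((fderiv ℝ u (circleMap 0 r θ, s)).comp (ContinuousLinearMap.inl ℝ ℂ ℝ)).toLinearMap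
  have hBapply (z : ℂ) : fderiv ℝ u (circleMap 0 r θ, s) (z, 0) = B z := rfl
  have hscale : B (circleMap 0 r θ * I) = r * B (I * circleMap 0 1 θ) := by
    rw [hcircle, mul_assoc, mul_comm (circleMap 0 1 θ), ← real_smul, map_smul, real_smul]
  rw [fderiv_circleIntegrand hu, wirt]
  simp only [hBapply, hscale, Function.comp_apply]
  rw [hcircle]
  linear_combination -r * circleMap 0 1 θ * I_mul_map_sub_map_I_mul B (circleMap 0 1 θ) -
    r * I * (B 1 + I * B I) * hunit

lemma integral_fderiv_circleIntegrand_radial (hu : ContDiff ℝ 1 u) (r s : ℝ) :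
    ∫ θ in 0..2 * π, fderiv ℝ (circleIntegrand u) ((r, s), θ) ((1, 0), 0) =
      2 * I * r * ∫ θ in 0..2 * π, wirt u (circleMap 0 r θ, s) := by
  have hradial : Continuous fun θ : ℝ => fderiv ℝ (circleIntegrand u) ((r, s), θ) ((1, 0), 0) :=
    (((contDiff_circleIntegrand hu).continuous_fderiv one_ne_zero).comp
      (by fun_prop : Continuous fun θ : ℝ => ((r, s), θ))).clm_apply continuous_const
  have hwirt : Continuous fun θ : ℝ => wirt u (circleMap 0 r θ, s) := by
    have := hu.continuous_fderiv one_ne_zero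
    unfold wirt
    fun_prop
  have hexact := intervalIntegral.integral_eq_sub_of_hasDerivAt
    (fun θ _ => hasDerivAt_circleMap_one_mul hu r s θ)
    ((hradial.sub (hwirt.const_mul _)).intervalIntegrable 0 (2 * π))
  rw [intervalIntegral.integral_sub (hradial.intervalIntegrable _ _)
    ((hwirt.const_mul _).intervalIntegrable _ _), intervalIntegral.integral_const_mul] at hexact
  have hperiodic (R : ℝ) : circleMap 0 R (2 * π) = circleMap 0 R 0 := by simp [circleMap]
  rw [hperiodic, hperiodic, sub_self] at hexact
  exact sub_eq_zero.1 hexact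

lemma hasFDerivAt_circleIntegral (hu : ContDiff ℝ 1 u) (r s : ℝ) :
    HasFDerivAt (fun p : ℝ × ℝ => ∮ z in C(0, p.1), u (z, p.2))
      ((ContinuousLinearMap.fst ℝ ℝ ℝ).smulRight
          (2 * I * r * ∫ θ in 0..2 * π, wirt u (circleMap 0 r θ, s)) +
        (ContinuousLinearMap.snd ℝ ℝ ℝ).smulRight (∮ z in C(0, r), pds u (z, s))) (r, s) := by
  have hK := contDiff_circleIntegrand hu
  simp only [circleIntegral_eq_intervalIntegral_circleIntegrand]
  refine (hasFDerivAt_intervalIntegral_of_contDiff hK 0 (2 * π) (r, s)).congr_fderiv ?_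
  have hintegrable : IntervalIntegrable (fun θ => (fderiv ℝ (circleIntegrand u) ((r, s), θ)).comp
      (ContinuousLinearMap.inl ℝ (ℝ × ℝ) ℝ)) MeasureTheory.volume 0 (2 * π) :=
    (((hK.continuous_fderiv one_ne_zero).comp
      (by fun_prop : Continuous fun θ : ℝ => ((r, s), θ))).clm_comp
        continuous_const).intervalIntegrable _ _
  ext
  · simp [ContinuousLinearMap.intervalIntegral_apply hintegrable,
      integral_fderiv_circleIntegrand_radial hu]
  · simp [ContinuousLinearMap.intervalIntegral_apply hintegrable, fderiv_circleIntegrand hu,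
      circleIntegrand, pds]

end CircleIntegral

section Lewy

/-- The Lewy operator `∂̄ - i z ∂/∂s`, the restriction of the example to `t = 0`. -/
noncomputable def lewyOp (u : ℂ × ℝ → ℂ) (p : ℂ × ℝ) : ℂ :=
  wirt u p - I * p.1 * pds u p

/-- Lewy's function `V(s + i r²) = ∮ z in C(0, r), u (z, s) + 2π ψ(s)`, where `u` is a solution of
`lewyOp u = ψ'`. It is used on the closed upper half-plane only; below, `√w.im` is `0`. -/
noncomputable def lewyTransform (u : ℂ × ℝ → ℂ) (ψ : ℝ → ℂ) (w : ℂ) : ℂ :=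
  (∮ z in C(0, √w.im), u (z, w.re)) + 2 * π * ψ w.re

variable {u : ℂ × ℝ → ℂ} {ψ : ℝ → ℂ}

lemma lewyTransform_ofReal (u : ℂ × ℝ → ℂ) (ψ : ℝ → ℂ) (s : ℝ) :
    lewyTransform u ψ s = 2 * π * ψ s := by
  simp [lewyTransform]

lemma continuous_lewyTransform (hu : ContDiff ℝ 1 u) (hψ : Continuous ψ) :
    Continuous (lewyTransform u ψ) := by
  have hcircle : Continuous fun p : ℝ × ℝ => ∮ z in C(0, p.1), u (z, p.2) :=
    continuous_iff_continuousAt.2 fun p => (hasFDerivAt_circleIntegral hu p.1 p.2).continuousAt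
  exact (hcircle.comp (by fun_prop : Continuous fun w : ℂ => (√w.im, w.re))).add (by fun_prop)

lemma integral_wirt_circleMap (hu : ContDiff ℝ 1 u) {r s : ℝ} {f : ℂ}
    (heq : ∀ θ, lewyOp u (circleMap 0 r θ, s) = f) :
    ∫ θ in 0..2 * π, wirt u (circleMap 0 r θ, s) =
      (∮ z in C(0, r), pds u (z, s)) + 2 * π * f := by
  have hpds : Continuous fun θ => circleMap 0 r θ * I * pds u (circleMap 0 r θ, s) := by
    have := hu.continuous_fderiv one_ne_zero
    unfold pds
    fun_prop
  have hwirt (θ : ℝ) : wirt u (circleMap 0 r θ, s) =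
      circleMap 0 r θ * I * pds u (circleMap 0 r θ, s) + f := by
    rw [← heq θ, lewyOp]; ring
  simp only [hwirt, circleIntegral, deriv_circleMap, smul_eq_mul]
  rw [intervalIntegral.integral_add (hpds.intervalIntegrable _ _)
    intervalIntegrable_const, intervalIntegral.integral_const]
  simp

/-- The chain rule turns `∂G/∂r = 2 i r ∂G/∂s` into the Cauchy-Riemann equation. -/
lemma differentiableAt_comp_sqrt_im_re {G : ℝ × ℝ → ℂ} {G' : ℝ × ℝ →L[ℝ] ℂ} {w : ℂ}
    (hw : 0 < w.im) (hG : HasFDerivAt G G' (√w.im, w.re))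
    (hCR : G' (1, 0) = 2 * I * √w.im * G' (0, 1)) :
    DifferentiableAt ℂ (fun ζ : ℂ => G (√ζ.im, ζ.re)) w := by
  have hcoord : HasFDerivAt (fun ζ : ℂ => (√ζ.im, ζ.re))
      (((1 / (2 * √w.im)) • imCLM).prod reCLM) w :=
    ((Real.hasDerivAt_sqrt hw.ne').comp_hasFDerivAt w imCLM.hasFDerivAt).prodMk reCLM.hasFDerivAt
  have hcomp := hG.comp w hcoord
  have hsqrt : (√w.im : ℂ) ≠ 0 := ofReal_ne_zero.2 (Real.sqrt_pos.2 hw).ne'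
  have hradial : G' (1 / (2 * √w.im), 0) = I * G' (0, 1) := by
    rw [show ((1 / (2 * √w.im), 0) : ℝ × ℝ) = (1 / (2 * √w.im)) • (1, 0) by simp, map_smul, hCR,
      real_smul]
    push_cast
    field_simp
  refine differentiableAt_complex_iff_differentiableAt_real.2 ⟨hcomp.differentiableAt, ?_⟩
  rw [show (fun ζ : ℂ => G (√ζ.im, ζ.re)) = G ∘ fun ζ : ℂ => (√ζ.im, ζ.re) from rfl, hcomp.fderiv]
  simpa using hradial

lemma differentiableAt_lewyTransform (hu : ContDiff ℝ 1 u) {w : ℂ} (hw : 0 < w.im)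
    (hψ : DifferentiableAt ℝ ψ w.re)
    (heq : ∀ θ, lewyOp u (circleMap 0 (√w.im) θ, w.re) = deriv ψ w.re) :
    DifferentiableAt ℂ (lewyTransform u ψ) w := by
  have hψ' : HasFDerivAt (fun p : ℝ × ℝ => 2 * π * ψ p.2)
      ((2 * π : ℂ) • (fderiv ℝ ψ w.re).comp (ContinuousLinearMap.snd ℝ ℝ ℝ)) (√w.im, w.re) :=
    (hψ.hasFDerivAt.comp (f := Prod.snd) (√w.im, w.re) hasFDerivAt_snd).const_mul (2 * π : ℂ)
  refine differentiableAt_comp_sqrt_im_re (G := fun p => (∮ z in C(0, p.1), u (z, p.2)) +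
    2 * π * ψ p.2) hw ((hasFDerivAt_circleIntegral hu _ _).add hψ') ?_
  rw [integral_wirt_circleMap hu heq]
  simp

lemma exists_contDiff_eventuallyEq {E F : Type*} [NormedAddCommGroup E] [NormedSpace ℝ E]
    [HasContDiffBump E] [NormedAddCommGroup F] [NormedSpace ℝ F]
    {n : ℕ} {f : E → F} {x : E} (hf : ContDiffAt ℝ n f x) :
    ∃ g : E → F, ContDiff ℝ n g ∧ g =ᶠ[𝓝 x] f := by
  obtain ⟨ε, hε, hball⟩ :=
    Metric.nhds_basis_closedBall.eventually_iff.1 (hf.eventually (by simp))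
  let χ : ContDiffBump x := ⟨ε / 2, ε, by positivity, by linarith⟩
  refine ⟨fun y => χ y • f y, contDiff_iff_contDiffAt.2 fun y => ?_, ?_⟩
  · by_cases hy : y ∈ tsupport χ
    · rw [χ.tsupport_eq] at hy
      exact χ.contDiffAt.smul (hball hy)
    · refine contDiffAt_const (c := (0 : F)) |>.congr_of_eventuallyEq ?_
      filter_upwards [notMem_tsupport_iff_eventuallyEq.1 hy] with q hq
      simp [hq]
  · filter_upwards [χ.eventuallyEq_one] with y hy
    simp [hy]

lemma lewyOp_congr {u₁ u₂ : ℂ × ℝ → ℂ} {p : ℂ × ℝ} (h : u₁ =ᶠ[𝓝 p] u₂) :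
    lewyOp u₁ p = lewyOp u₂ p := by
  simp only [lewyOp, wirt, pds, h.fderiv_eq]

lemma eventually_forall_circleMap {P : ℂ × ℝ → Prop} (hP : ∀ᶠ p in 𝓝 0, P p) :
    ∀ᶠ w : ℂ in 𝓝 0, ∀ θ, P (circleMap 0 (√w.im) θ, w.re) := by
  obtain ⟨ρ, hρ, hball⟩ := Metric.eventually_nhds_iff.1 hP
  have hsmall : Tendsto (fun w : ℂ => max √w.im |w.re|) (𝓝 0) (𝓝 0) :=
    Continuous.tendsto' (by fun_prop) _ _ (by simp)
  filter_upwards [hsmall.eventually_lt_const hρ] with w hw θ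
  refine hball ?_
  simpa [Prod.norm_def, abs_of_nonneg (Real.sqrt_nonneg _)] using hw

theorem eventually_eq_zero_of_lewyOp_eq_deriv (hu : ContDiffAt ℝ 1 u 0) (hψ : Differentiable ℝ ψ)
    (heq : ∀ᶠ p in 𝓝 0, lewyOp u p = deriv ψ p.2) (hneg : ∀ᶠ s in 𝓝[<] 0, ψ s = 0) :
    ∀ᶠ s in 𝓝 0, ψ s = 0 := by
  obtain ⟨g, hg, hgu⟩ := exists_contDiff_eventuallyEq (n := 1) hu
  have hgeq : ∀ᶠ p in 𝓝 0, lewyOp g p = deriv ψ p.2 := by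
    filter_upwards [heq, hgu.eventually_nhds] with p hp hgup
    rw [lewyOp_congr hgup, hp]
  have hholo : ∀ᶠ w in 𝓝 (0 : ℂ), 0 < w.im → DifferentiableAt ℂ (lewyTransform g ψ) w := by
    filter_upwards [eventually_forall_circleMap hgeq] with w hw him
    exact differentiableAt_lewyTransform hg him (hψ _) hw
  have hboundary := eventually_ofReal_eq_zero_of_eventually_nhdsLT
    (continuous_lewyTransform hg hψ.continuous) hholo
    (hneg.mono fun s hs => by rw [lewyTransform_ofReal, hs, mul_zero])
  filter_upwards [hboundary] with s hs
  simpa [lewyTransform_ofReal, Real.pi_ne_zero] using hs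

end Lewy

section Transversal

variable {C D : ℂ × ℝ × ℝ → ℂ} {h : ℂ × ℝ → ℂ} {v : ℂ × ℝ × ℝ → ℂ}

lemma hasDerivAt_zero_smul_of_continuousAt {𝕜 F : Type*} [NontriviallyNormedField 𝕜]
    [NormedAddCommGroup F] [NormedSpace 𝕜 F] {R : 𝕜 → F} (hR : ContinuousAt R 0) :
    HasDerivAt (fun t => t • R t) (R 0) 0 := by
  rw [hasDerivAt_iff_tendsto_slope]
  refine (hR.tendsto.mono_left nhdsWithin_le_nhds).congr' ?_
  filter_upwards [self_mem_nhdsWithin] with t ht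
  simp [slope_def_module, smul_smul, inv_mul_cancel₀ ht]

lemma fderiv_comp_add_mul {p : ℂ × ℝ × ℝ} (hh : DifferentiableAt ℝ h (p.1, p.2.1))
    (hv : DifferentiableAt ℝ v p) (x : ℂ × ℝ × ℝ) :
    fderiv ℝ (fun q : ℂ × ℝ × ℝ => h (q.1, q.2.1) + q.2.2 * v q) p x =
      fderiv ℝ h (p.1, p.2.1) (x.1, x.2.1) + (p.2.2 * fderiv ℝ v p x + x.2.2 * v p) := by
  let dropT : ℂ × ℝ × ℝ →L[ℝ] ℂ × ℝ :=
    (ContinuousLinearMap.fst ℝ ℂ (ℝ × ℝ)).prod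
      ((ContinuousLinearMap.fst ℝ ℝ ℝ).comp (ContinuousLinearMap.snd ℝ ℂ (ℝ × ℝ)))
  let coordT : ℂ × ℝ × ℝ →L[ℝ] ℂ :=
    ofRealCLM.comp ((ContinuousLinearMap.snd ℝ ℝ ℝ).comp (ContinuousLinearMap.snd ℝ ℂ (ℝ × ℝ)))
  have hh' : HasFDerivAt (fun q => h (dropT q)) _ p := hh.hasFDerivAt.comp p dropT.hasFDerivAt
  have hsum := hh'.add (coordT.hasFDerivAt (x := p).mul hv.hasFDerivAt)
  refine (DFunLike.congr_fun hsum.fderiv x).trans ?_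
  simp only [ContinuousLinearMap.comp_apply, ContinuousLinearMap.coe_snd', ofRealCLM_apply,
    add_apply, ContinuousLinearMap.prod_apply, ContinuousLinearMap.coe_fst', smul_apply,
    smul_eq_mul, dropT, coordT]
  ring

/-- The product rule, as `L t = t D`. -/
lemma Lgen_comp_add_mul {p : ℂ × ℝ × ℝ} (hh : DifferentiableAt ℝ h (p.1, p.2.1))
    (hv : DifferentiableAt ℝ v p) :
    Lgen C D (fun q => h (q.1, q.2.1) + q.2.2 * v q) p =
      wirt h (p.1, p.2.1) + C p * pds h (p.1, p.2.1) + p.2.2 * (Lgen C D v p + D p * v p) := by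
  have hzero : fderiv ℝ h (p.1, p.2.1) (0, 0) = 0 := map_zero _
  simp only [Lgen, wirt3, pds3, pdt3, wirt, pds, fderiv_comp_add_mul hh hv, ofReal_zero, ofReal_one,
    zero_mul, one_mul, hzero]
  ring

lemma Lgen_slice_zero {p : ℂ × ℝ} (hv : DifferentiableAt ℝ v (p.1, p.2, 0)) :
    Lgen C D v (p.1, p.2, 0) = L0gen C (fun q => v (q.1, q.2, 0)) p := by
  let slice : ℂ × ℝ →L[ℝ] ℂ × ℝ × ℝ :=
    (ContinuousLinearMap.fst ℝ ℂ ℝ).prod ((ContinuousLinearMap.snd ℝ ℂ ℝ).prod 0)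
  have hslice (x : ℂ × ℝ) : fderiv ℝ (fun q : ℂ × ℝ => v (q.1, q.2, 0)) p x =
      fderiv ℝ v (p.1, p.2, 0) (x.1, x.2, 0) :=
    DFunLike.congr_fun
      (HasFDerivAt.comp (f := slice) p hv.hasFDerivAt slice.hasFDerivAt).fderiv x
  simp [Lgen, L0gen, wirt3, pds3, wirt, pds, hslice]

lemma continuousAt_Lgen {p : ℂ × ℝ × ℝ} (hC : ContinuousAt C p) (hD : ContinuousAt D p)
    (hv : ContDiffAt ℝ 1 v p) : ContinuousAt (Lgen C D v) p := by
  have hv' : ContinuousAt (fderiv ℝ v) p := hv.continuousAt_fderiv one_ne_zero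
  unfold Lgen wirt3 pds3 pdt3
  fun_prop

/-- Obtained by differentiating `L(h + t v) = 0` in `t` at `t = 0`. -/
lemma L0gen_slice_add_eq_zero {p : ℂ × ℝ} (hC : DifferentiableAt ℝ C (p.1, p.2, 0))
    (hD : ContinuousAt D (p.1, p.2, 0)) (hh : DifferentiableAt ℝ h p)
    (hv : ContDiffAt ℝ 1 v (p.1, p.2, 0))
    (hL : ∀ᶠ q in 𝓝 (p.1, p.2, 0), Lgen C D (fun q => h (q.1, q.2.1) + q.2.2 * v q) q = 0) :
    L0gen C (fun q => v (q.1, q.2, 0)) p + D (p.1, p.2, 0) * v (p.1, p.2, 0) +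
      pdt3 C (p.1, p.2, 0) * pds h p = 0 := by
  have hline : ContinuousAt (fun t : ℝ => (p.1, p.2, t)) 0 := by fun_prop
  have hremainder : ContinuousAt
      (fun t : ℝ => Lgen C D v (p.1, p.2, t) + D (p.1, p.2, t) * v (p.1, p.2, t)) 0 :=
    ((continuousAt_Lgen hC.continuousAt hD hv).add (hD.mul hv.continuousAt)).comp
      (f := fun t : ℝ => (p.1, p.2, t)) hline
  have hCline : HasDerivAt (fun t : ℝ => C (p.1, p.2, t)) (pdt3 C (p.1, p.2, 0)) 0 :=
    hC.hasFDerivAt.comp_hasDerivAt (f := fun t : ℝ => (p.1, p.2, t)) 0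
      ((hasDerivAt_const _ _).prodMk ((hasDerivAt_const _ _).prodMk (hasDerivAt_id _)))
  have hderiv := ((hCline.mul_const (pds h p)).const_add (wirt h p)).add
    (hasDerivAt_zero_smul_of_continuousAt hremainder)
  have hvanish : (fun t : ℝ => wirt h p + C (p.1, p.2, t) * pds h p +
      t • (Lgen C D v (p.1, p.2, t) + D (p.1, p.2, t) * v (p.1, p.2, t))) =ᶠ[𝓝 0] 0 := by
    filter_upwards [hline.eventually (hL.and (hv.eventually (by simp)))] with t ⟨hLt, hvt⟩
    rw [Lgen_comp_add_mul hh (hvt.differentiableAt one_ne_zero)] at hLt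
    exact hLt
  have hzero := hderiv.unique ((hasDerivAt_const 0 0).congr_of_eventuallyEq hvanish)
  rw [Lgen_slice_zero (hv.differentiableAt one_ne_zero)] at hzero
  linear_combination hzero

end Transversal

section Example

/-- The coefficient `C(z, s, t) = -i z - t φ(s)`. At `t = 0` it is the coefficient of the Lewy
operator, and its `t`-derivative is what turns `φ` into the right-hand side of Lewy's equation. -/
noncomputable def perturbedLewyCoeff (φ : ℝ → ℂ) (p : ℂ × ℝ × ℝ) : ℂ :=
  -I * p.1 - p.2.2 * φ p.2.1

/-- The first integral `s + i |z|²` of the Lewy operator, which admits no extension to `t ≠ 0`. -/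
noncomputable def lewyFirstIntegral (p : ℂ × ℝ) : ℂ :=
  p.2 + I * (p.1 * conj p.1)

lemma contDiff_perturbedLewyCoeff {φ : ℝ → ℂ} {n : WithTop ℕ∞} (hφ : ContDiff ℝ n φ) :
    ContDiff ℝ n (perturbedLewyCoeff φ) := by
  have hofReal : ContDiff ℝ n ((↑) : ℝ → ℂ) := ofRealCLM.contDiff
  unfold perturbedLewyCoeff
  fun_prop

lemma L0gen_perturbedLewyCoeff (φ : ℝ → ℂ) : L0gen (perturbedLewyCoeff φ) = lewyOp := by
  ext u p
  simp only [L0gen, perturbedLewyCoeff, lewyOp, ofReal_zero]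
  ring

lemma pdt3_perturbedLewyCoeff {φ : ℝ → ℂ} {p : ℂ × ℝ}
    (hC : DifferentiableAt ℝ (perturbedLewyCoeff φ) (p.1, p.2, 0)) :
    pdt3 (perturbedLewyCoeff φ) (p.1, p.2, 0) = -φ p.2 := by
  have hline : HasDerivAt (fun t : ℝ => (p.1, p.2, t)) (0, 0, 1) 0 :=
    (hasDerivAt_const _ _).prodMk ((hasDerivAt_const _ _).prodMk (hasDerivAt_id _))
  have haffine : HasDerivAt (fun t : ℝ => -I * p.1 - t * φ p.2) (-(1 * φ p.2)) 0 :=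
    (((hasDerivAt_id (0 : ℝ)).ofReal_comp.mul_const _).const_sub _)
  rw [one_mul] at haffine
  exact (hC.hasFDerivAt.comp_hasDerivAt (f := fun t : ℝ => (p.1, p.2, t)) 0 hline).unique haffine

lemma analyticAt_lewyFirstIntegral (p : ℂ × ℝ) : AnalyticAt ℝ lewyFirstIntegral p := by
  have hs : AnalyticAt ℝ (fun q : ℂ × ℝ => (q.2 : ℂ)) p :=
    (ofRealCLM.comp (ContinuousLinearMap.snd ℝ ℂ ℝ)).analyticAt p
  have hconj : AnalyticAt ℝ (fun q : ℂ × ℝ => conj q.1) p :=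
    (conjCLE.toContinuousLinearMap.comp (ContinuousLinearMap.fst ℝ ℂ ℝ)).analyticAt p
  exact hs.add (analyticAt_const.mul (analyticAt_fst.mul hconj))

lemma fderiv_lewyFirstIntegral (p x : ℂ × ℝ) :
    fderiv ℝ lewyFirstIntegral p x = x.2 + I * (p.1 * conj x.1 + x.1 * conj p.1) := by
  have hs := (ofRealCLM.comp (ContinuousLinearMap.snd ℝ ℂ ℝ)).hasFDerivAt (x := p)
  have hz := (ContinuousLinearMap.fst ℝ ℂ ℝ).hasFDerivAt (x := p)
  have hconj := (conjCLE.toContinuousLinearMap.comp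
    (ContinuousLinearMap.fst ℝ ℂ ℝ)).hasFDerivAt (x := p)
  have hsum : HasFDerivAt lewyFirstIntegral _ p := hs.add ((hz.mul hconj).const_mul I)
  rw [hsum.fderiv]
  simp [mul_comm, mul_add]

lemma pds_lewyFirstIntegral (p : ℂ × ℝ) : pds lewyFirstIntegral p = 1 := by
  simp [pds, fderiv_lewyFirstIntegral]

lemma lewyOp_lewyFirstIntegral (p : ℂ × ℝ) : lewyOp lewyFirstIntegral p = 0 := by
  simp only [lewyOp, pds_lewyFirstIntegral, wirt, fderiv_lewyFirstIntegral, map_one, conj_I,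
    ofReal_zero]
  linear_combination (I * conj p.1 / 2 - I * p.1 / 2) * I_sq

lemma lewyOp_slice_eq_of_Lgen_eq_zero {φ : ℝ → ℂ} (hφ : Differentiable ℝ φ) {v : ℂ × ℝ × ℝ → ℂ}
    {p : ℂ × ℝ} (hv : ContDiffAt ℝ 1 v (p.1, p.2, 0))
    (hL : ∀ᶠ q in 𝓝 (p.1, p.2, 0), Lgen (perturbedLewyCoeff φ) 0
      (fun q => lewyFirstIntegral (q.1, q.2.1) + q.2.2 * v q) q = 0) :
    lewyOp (fun q => v (q.1, q.2, 0)) p = φ p.2 := by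
  have hC : DifferentiableAt ℝ (perturbedLewyCoeff φ) (p.1, p.2, 0) := by
    unfold perturbedLewyCoeff
    fun_prop
  have hfirst := L0gen_slice_add_eq_zero (D := 0) hC continuousAt_const
    (analyticAt_lewyFirstIntegral p).differentiableAt hv hL
  rw [L0gen_perturbedLewyCoeff, pdt3_perturbedLewyCoeff hC, pds_lewyFirstIntegral] at hfirst
  rwa [Pi.zero_apply, zero_mul, add_zero, mul_one, add_neg_eq_zero] at hfirst

/-- A smooth function that vanishes exactly on the nonpositive reals: `exp (-1 / s)` for `s > 0`. -/
noncomputable def flatFunction (s : ℝ) : ℂ :=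
  expNegInvGlue s

lemma contDiff_flatFunction {n : ℕ∞} : ContDiff ℝ n flatFunction :=
  ofRealCLM.contDiff.comp expNegInvGlue.contDiff

lemma eventually_flatFunction_eq_zero : ∀ᶠ s in 𝓝[<] 0, flatFunction s = 0 := by
  filter_upwards [self_mem_nhdsWithin] with s hs
  rw [flatFunction, expNegInvGlue.zero_of_nonpos (le_of_lt hs), ofReal_zero]

lemma not_eventually_flatFunction_eq_zero : ¬ ∀ᶠ s in 𝓝 0, flatFunction s = 0 := by
  intro hzero
  have hpos : ∀ᶠ s : ℝ in 𝓝[>] 0, 0 < s := self_mem_nhdsWithin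
  obtain ⟨s, hs, hs0⟩ := ((hzero.filter_mono nhdsWithin_le_nhds).and hpos).exists
  exact (expNegInvGlue.pos_of_pos hs0).ne' (ofReal_eq_zero.1 hs)

lemma eventually_eq_zero_of_Lgen_perturbedLewyCoeff_deriv {ψ : ℝ → ℂ} (hψ : Differentiable ℝ ψ)
    (hψ' : Differentiable ℝ (deriv ψ)) (hneg : ∀ᶠ s in 𝓝[<] 0, ψ s = 0) {v : ℂ × ℝ × ℝ → ℂ}
    (hv : ContDiffAt ℝ 1 v (0, 0, 0))
    (hL : ∀ᶠ p in 𝓝 (0, 0, 0), Lgen (perturbedLewyCoeff (deriv ψ)) 0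
      (fun q => lewyFirstIntegral (q.1, q.2.1) + q.2.2 * v q) p = 0) :
    ∀ᶠ s in 𝓝 0, ψ s = 0 := by
  have hslice : ContDiff ℝ 1 fun p : ℂ × ℝ => (p.1, p.2, (0 : ℝ)) := by fun_prop
  refine eventually_eq_zero_of_lewyOp_eq_deriv (u := fun p => v (p.1, p.2, 0))
    (hv.comp (f := fun p : ℂ × ℝ => (p.1, p.2, (0 : ℝ))) 0 hslice.contDiffAt) hψ ?_ hneg
  have hnear : ∀ᶠ p in 𝓝 (0, 0, 0), ContDiffAt ℝ 1 v p := hv.eventually (by simp)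
  filter_upwards [(hslice.continuous.tendsto 0).eventually
    (hnear.and hL.eventually_nhds)] with p ⟨hvp, hLp⟩
  exact lewyOp_slice_eq_of_Lgen_eq_zero hψ' hvp hLp

end Example

/-- Non-extension example: there exist a smooth coefficient `C`, a real analytic
coefficient `D` and a real analytic function `h` such that `L⁰h = 0` near the origin of
`ℂ × ℝ`, yet there is no `C¹` function `v` on any neighborhood `U` of the origin of
`ℂ × ℝ × ℝ` with `L(h + t·v) = 0` on `U`. -/
theorem exists_non_extendable :
    ∃ (C D : ℂ × ℝ × ℝ → ℂ) (h : ℂ × ℝ → ℂ),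
      ContDiff ℝ (⊤ : ℕ∞) C ∧ (∀ p, AnalyticAt ℝ D p) ∧ (∀ p, AnalyticAt ℝ h p) ∧
      (∃ V : Set (ℂ × ℝ), IsOpen V ∧ ((0, 0) : ℂ × ℝ) ∈ V ∧ ∀ p ∈ V, L0gen C h p = 0) ∧
      ¬ ∃ (U : Set (ℂ × ℝ × ℝ)) (v : ℂ × ℝ × ℝ → ℂ),
          IsOpen U ∧ ((0, 0, 0) : ℂ × ℝ × ℝ) ∈ U ∧ ContDiffOn ℝ 1 v U ∧
          ∀ p ∈ U, Lgen C D (fun q => h (q.1, q.2.1) + (q.2.2 : ℂ) * v q) p = 0 := by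
  have hsmooth : ContDiff ℝ (⊤ : ℕ∞) (deriv flatFunction) :=
    (contDiff_infty_iff_deriv.1 contDiff_flatFunction).2
  refine ⟨perturbedLewyCoeff (deriv flatFunction), 0, lewyFirstIntegral,
    contDiff_perturbedLewyCoeff hsmooth, fun _ => analyticAt_const, analyticAt_lewyFirstIntegral,
    ⟨univ, isOpen_univ, mem_univ _, fun p _ => ?_⟩, ?_⟩
  · rw [L0gen_perturbedLewyCoeff, lewyOp_lewyFirstIntegral]
  · rintro ⟨U, v, hUopen, hU, hv, hL⟩
    have hUnhds := hUopen.mem_nhds hU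
    exact not_eventually_flatFunction_eq_zero <|
      eventually_eq_zero_of_Lgen_perturbedLewyCoeff_deriv
        ((contDiff_flatFunction (n := 1)).differentiable one_ne_zero)
        (hsmooth.differentiable (by simp)) eventually_flatFunction_eq_zero
        (hv.contDiffAt hUnhds) (eventually_of_mem hUnhds hL)
end
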